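/- Let u be the bounded C^∞ solution of the problem 𝒫u = f in Ω×(0,T), u = g on ∂Ω×(0,T), u(·,0) = g(·,0) in Ω. For k ≥ 1 and 1 ≤ l ≤ I let u_l^k ∈ C^∞(cl(Ω_l×(0,T))) satisfy: 𝒫u_l^k = f in Ω_l×(0,T); the Robin transmission conditions ∂_{x_n}u_l^k(·,a_l,·) + p u_l^k(·,a_l,·) = ∂_{x_n}u_{l-1}^{k-1}(·,a_l,·) + p u_{l-1}^{k-1}(·,a_l,·) on D×(0,T) for 2 ≤ l ≤ I, and ∂_{x_n}u_l^k(·,b_l,·) + p u_l^k(·,b_l,·) = ∂_{x_n}u_{l+1}^{k-1}(·,b_l,·) + p u_{l+1}^{k-1}(·,b_l,·) on D×(0,T) for 1 ≤ l ≤ I−1; u_l^k = g on (∂Ω_l ∩ ∂Ω)×(0,T); u_l^k(·,0) = g(·,0) in Ω_l; u_1^k(·,α,·) = g(·,α,·) and u_I^k(·,β,·) = g(·,β,·) (the first iterates u_l^1 being arbitrary such smooth solutions with smooth bounded initial Robin guess h^0). Then there exists Γ > 0, depending only on p, the coefficient bounds and the decomposition, such that for every strictly positive φ ∈ C^1([0,T])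 with φ'(t) ≤ −Γ φ(t) for all t ∈ [0,T], one has lim_{k→∞} max_{1≤l≤I} sup_{cl(Ω_l)×[0,T]} ( ∂_{x_n}(u_l^k − u)(x,t) )^2 e^{2p x_n} φ(t) = 0. -/

import Mathlib

open Set Filter

/-- Spatial partial derivative `∂u/∂xᵢ` of a function `u : ℝⁿ → ℝ`. -/
noncomputable def pd1 {m : ℕ} (i : Fin m) (u : (Fin m → ℝ) → ℝ) (x : Fin m → ℝ) : ℝ :=
  fderiv ℝ u x (Pi.single i 1)

/-- Second spatial partial derivative `∂²u/∂xᵢ∂xⱼ`. -/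
noncomputable def pd2 {m : ℕ} (i j : Fin m) (u : (Fin m → ℝ) → ℝ) (x : Fin m → ℝ) : ℝ :=
  pd1 i (fun y => pd1 j u y) x

/-- The parabolic operator
`𝒫u = ∂ₜu − Σᵢⱼ aᵢⱼ(t) ∂ᵢ∂ⱼu + Σᵢ bᵢ(t) ∂ᵢu + c(t) u`. -/
noncomputable def parabolicOp {m : ℕ} (a : Fin m → Fin m → ℝ → ℝ) (b : Fin m → ℝ → ℝ)
    (c : ℝ → ℝ) (u : (Fin m → ℝ) → ℝ → ℝ) (x : Fin m → ℝ) (t : ℝ) : ℝ :=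
  deriv (fun s => u x s) t
    - ∑ i, ∑ j, a i j t * pd2 i j (fun y => u y t) x
    + ∑ i, b i t * pd1 i (fun y => u y t) x
    + c t * u x t

/-- The transformed operator `𝒫ₚε = ∂ₜε − Σᵢⱼ aᵢⱼ ∂ᵢ∂ⱼε
+ Σ_{i<n} (2p aᵢₙ + bᵢ) ∂ᵢε + (2p aₙₙ + bₙ) ∂ₙε + (c − p bₙ − p² aₙₙ) ε`,
in dimension `n+1`, the last coordinate playing the role of `xₙ`. -/
noncomputable def transOp {n : ℕ} (p : ℝ) (a : Fin (n+1) → Fin (n+1) → ℝ → ℝ)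
    (b : Fin (n+1) → ℝ → ℝ) (c : ℝ → ℝ)
    (ε : (Fin (n+1) → ℝ) → ℝ → ℝ) (x : Fin (n+1) → ℝ) (t : ℝ) : ℝ :=
  deriv (fun s => ε x s) t
    - ∑ i, ∑ j, a i j t * pd2 i j (fun y => ε y t) x
    + ∑ i ∈ Finset.univ.erase (Fin.last n),
        (2 * p * a i (Fin.last n) t + b i t) * pd1 i (fun y => ε y t) x
    + (2 * p * a (Fin.last n) (Fin.last n) t + b (Fin.last n) t) *
        pd1 (Fin.last n) (fun y => ε y t) x
    + (c t - p * b (Fin.last n) t - p ^ 2 * a (Fin.last n) (Fin.last n) t) * ε x t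

/-!
Multiply the error `uₗᵏ − u` by the weight `exp (p xₙ − Λ t)` and call the product `Fₗᵏ`. Then
`Vₗᵏ = ∂ₙ Fₗᵏ` is the error of the Robin traces times the same weight, so the transmission
conditions become Dirichlet conditions for `Vₗᵏ`; and since the coefficients do not depend on `x`,
`Vₗᵏ` solves the same homogeneous equation as `Fₗᵏ`, whose potential is as large as we like if `Λ`
is. Profiles `exp (γ (s − sₗ) (s − rₗ))` in `s = xₙ` are then supersolutions that equal `1` at the
interfaces of their own subdomain and at most `θ < 1` at the interfaces of the neighbours, so the
maximum principle contracts the bound on `Vₗᵏ` by the factor `θ` in each iteration.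

At an outer end `e` no value of `Vₗᵏ` is prescribed. There `Fₗᵏ = 0`, and comparing `Fₗᵏ` with a
multiple of `1 − exp (−η (s − e))` bounds its derivative at `e` by a fixed multiple of the bound at
the other end of the subdomain; for large `γ` the profile exceeds that multiple at `e`. Finally
`Fₗᵏ` itself is controlled by comparison with the same profiles, through its last derivative at the
interfaces.
-/

open scoped Topology ContDiff

section Calculus

/-- Space-time points `(x, t)` with `m` space dimensions. -/
abbrev SpaceTime (m : ℕ) : Type := (Fin m → ℝ) × ℝ

/-- The `i`-th spatial unit vector of space-time. -/
def spaceDir {m : ℕ} (i : Fin m) : SpaceTime m := (Pi.single i 1, 0)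

/-- Time-dependent coefficients of the operator `∂ₜ − Σᵢⱼ aᵢⱼ(t) ∂ᵢ∂ⱼ + Σᵢ bᵢ(t) ∂ᵢ + c(t)`. -/
structure ParabolicCoeffs (m : ℕ) where
  /-- The second-order coefficients `aᵢⱼ`. -/
  diffusion : Fin m → Fin m → ℝ → ℝ
  /-- The first-order coefficients `bᵢ`. -/
  drift : Fin m → ℝ → ℝ
  /-- The zeroth-order coefficient `c`. -/
  potential : ℝ → ℝ

namespace ParabolicCoeffs

variable {m : ℕ} (K : ParabolicCoeffs m) {F G : SpaceTime m → ℝ} {q : SpaceTime m}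

/-- The parabolic operator with coefficients `K`, acting on functions of the space-time variable
through Fréchet derivatives; `parabolicOp` is its counterpart for partial derivatives. -/
noncomputable def op (F : SpaceTime m → ℝ) (q : SpaceTime m) : ℝ :=
  fderiv ℝ F q (0, 1)
    - ∑ i, ∑ j, K.diffusion i j q.2 * fderiv ℝ (fderiv ℝ F) q (spaceDir i) (spaceDir j)
    + ∑ i, K.drift i q.2 * fderiv ℝ F q (spaceDir i)
    + K.potential q.2 * F q

/-- The coefficients of the operator `e ^ L ∘ 𝒫 ∘ e ^ (-L)` for a linear functional `L` on
space-time. -/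
noncomputable def conj (L : SpaceTime m →L[ℝ] ℝ) : ParabolicCoeffs m where
  diffusion := K.diffusion
  drift i t := K.drift i t + ∑ j, (K.diffusion i j t + K.diffusion j i t) * L (spaceDir j)
  potential t := K.potential t - L (0, 1) - ∑ i, K.drift i t * L (spaceDir i)
    - ∑ i, ∑ j, K.diffusion i j t * (L (spaceDir i) * L (spaceDir j))

theorem op_congr (h : F =ᶠ[𝓝 q] G) : K.op F q = K.op G q := by
  simp only [op, h.fderiv_eq, h.fderiv.fderiv_eq, h.eq_of_nhds]

theorem op_neg : K.op (fun r => -F r) q = -K.op F q := by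
  have h : fderiv ℝ (fun r => -F r) = fun r => -fderiv ℝ F r := funext fun _ => fderiv_fun_neg
  simp only [op, h, fderiv_fun_neg, neg_apply, mul_neg, Finset.sum_neg_distrib]
  ring

end ParabolicCoeffs

theorem differentiableAt_fderiv_of_contDiffAt {E F : Type*} [NormedAddCommGroup E]
    [NormedSpace ℝ E] [NormedAddCommGroup F] [NormedSpace ℝ F] {f : E → F} {q : E}
    (hf : ContDiffAt ℝ 2 f q) : DifferentiableAt ℝ (fderiv ℝ f) q :=
  (hf.fderiv_right (m := 1) (by norm_num)).differentiableAt one_ne_zero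

theorem eventually_differentiableAt_of_contDiffAt {E F : Type*} [NormedAddCommGroup E]
    [NormedSpace ℝ E] [NormedAddCommGroup F] [NormedSpace ℝ F] {f : E → F} {q : E}
    (hf : ContDiffAt ℝ 2 f q) : ∀ᶠ r in 𝓝 q, DifferentiableAt ℝ f r :=
  (hf.eventually (by simp)).mono fun _ h => h.differentiableAt two_ne_zero

theorem fderiv_fderiv_apply {E F : Type*} [NormedAddCommGroup E] [NormedSpace ℝ E]
    [NormedAddCommGroup F] [NormedSpace ℝ F] {f : E → F} {q : E} (hf : ContDiffAt ℝ 2 f q)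
    (v : E) :
    fderiv ℝ (fun r => fderiv ℝ f r v) q = fderiv ℝ (fderiv ℝ f) q v := by
  ext w
  rw [(hf.isSymmSndFDerivAt (by simp)) v w,
    fderiv_clm_apply (differentiableAt_fderiv_of_contDiffAt hf) (differentiableAt_const v)]
  simp

theorem fderiv_exp_mul {E : Type*} [NormedAddCommGroup E] [NormedSpace ℝ E] {F : E → ℝ} {q : E}
    (hF : DifferentiableAt ℝ F q) (L : E →L[ℝ] ℝ) :
    fderiv ℝ (fun r => Real.exp (L r) * F r) q = Real.exp (L q) • (fderiv ℝ F q + F q • L) := by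
  have h := (L.hasFDerivAt (x := q)).exp.mul hF.hasFDerivAt
  refine h.fderiv.trans (ContinuousLinearMap.ext fun v => ?_)
  simp only [add_apply, smul_apply, smul_eq_mul]
  ring

theorem fderiv_fderiv_exp_mul {E : Type*} [NormedAddCommGroup E] [NormedSpace ℝ E] {F : E → ℝ}
    {q : E} (hF : ContDiffAt ℝ 2 F q) (L : E →L[ℝ] ℝ) (v w : E) :
    fderiv ℝ (fderiv ℝ fun r => Real.exp (L r) * F r) q v w
      = Real.exp (L q) * (fderiv ℝ (fderiv ℝ F) q v w + L w * fderiv ℝ F q v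
          + L v * fderiv ℝ F q w + L v * L w * F q) := by
  have hfirst : fderiv ℝ (fun r => Real.exp (L r) * F r)
      =ᶠ[𝓝 q] fun r => Real.exp (L r) • (fderiv ℝ F r + F r • L) :=
    (eventually_differentiableAt_of_contDiffAt hF).mono fun r hr => fderiv_exp_mul hr L
  have hsecond := (L.hasFDerivAt (x := q)).exp.smul
    ((differentiableAt_fderiv_of_contDiffAt hF).hasFDerivAt.add
      ((hF.differentiableAt two_ne_zero).hasFDerivAt.smul_const L))
  rw [hfirst.fderiv_eq]
  refine (congrArg (fun M : E →L[ℝ] E →L[ℝ] ℝ => M v w) hsecond.fderiv).trans ?_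
  simp only [add_apply, smul_apply, smul_eq_mul, ContinuousLinearMap.smulRight_apply,
    Pi.add_apply]
  ring

theorem sum_add_transpose_mul {ι : Type*} [Fintype ι] (A : ι → ι → ℝ) (x y : ι → ℝ) :
    ∑ i, (∑ j, (A i j + A j i) * x j) * y i = ∑ i, ∑ j, A i j * (x j * y i + x i * y j) := by
  have hswap : ∑ i, ∑ j, A j i * (x j * y i) = ∑ i, ∑ j, A i j * (x i * y j) := Finset.sum_comm
  simp only [mul_add, add_mul, Finset.sum_mul, Finset.sum_add_distrib, mul_assoc, hswap]

theorem sum_conj_diffusion_sub_sum_conj_drift {ι : Type*} [Fintype ι] (A H : ι → ι → ℝ)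
    (b x g : ι → ℝ) (y : ℝ) :
    ∑ i, ∑ j, A i j * (H i j + x j * g i + x i * g j + x i * x j * y)
        - ∑ i, (b i + ∑ j, (A i j + A j i) * x j) * (g i + y * x i)
      = ∑ i, ∑ j, A i j * H i j - ∑ i, b i * g i
        - (∑ i, b i * x i + ∑ i, ∑ j, A i j * (x i * x j)) * y := by
  have hdrift : ∑ i, (b i + ∑ j, (A i j + A j i) * x j) * (g i + y * x i)
      = ∑ i, b i * g i + (∑ i, b i * x i) * y
        + ∑ i, ∑ j, A i j * (x j * g i + x i * g j)
        + (∑ i, ∑ j, A i j * (x j * x i + x i * x j)) * y := by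
    rw [← sum_add_transpose_mul A x g, ← sum_add_transpose_mul A x x, Finset.sum_mul,
      Finset.sum_mul, ← Finset.sum_add_distrib, ← Finset.sum_add_distrib,
      ← Finset.sum_add_distrib]
    exact Finset.sum_congr rfl fun i _ => by ring
  have hdiffusion : ∑ i, ∑ j, A i j * (H i j + x j * g i + x i * g j + x i * x j * y)
      = ∑ i, ∑ j, A i j * H i j + ∑ i, ∑ j, A i j * (x j * g i + x i * g j)
        + (∑ i, ∑ j, A i j * (x i * x j)) * y := by
    simp only [Finset.sum_mul, ← Finset.sum_add_distrib]
    exact Finset.sum_congr rfl fun i _ => Finset.sum_congr rfl fun j _ => by ring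
  have hdouble : ∑ i, ∑ j, A i j * (x j * x i + x i * x j)
      = 2 * ∑ i, ∑ j, A i j * (x i * x j) := by
    simp only [Finset.mul_sum]
    exact Finset.sum_congr rfl fun i _ => Finset.sum_congr rfl fun j _ => by ring
  rw [hdrift, hdiffusion, hdouble]
  ring

namespace ParabolicCoeffs

variable {m : ℕ} (K : ParabolicCoeffs m) {F G : SpaceTime m → ℝ} {q : SpaceTime m}

theorem op_sub (hF : ContDiffAt ℝ 2 F q) (hG : ContDiffAt ℝ 2 G q) :
    K.op (fun r => F r - G r) q = K.op F q - K.op G q := by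
  have hfirst : fderiv ℝ (fun r => F r - G r) =ᶠ[𝓝 q] fun r => fderiv ℝ F r - fderiv ℝ G r := by
    filter_upwards [eventually_differentiableAt_of_contDiffAt hF,
      eventually_differentiableAt_of_contDiffAt hG] with r hFr hGr using fderiv_fun_sub hFr hGr
  have hsecond : fderiv ℝ (fderiv ℝ fun r => F r - G r) q
      = fderiv ℝ (fderiv ℝ F) q - fderiv ℝ (fderiv ℝ G) q :=
    hfirst.fderiv_eq.trans (fderiv_fun_sub (differentiableAt_fderiv_of_contDiffAt hF)
      (differentiableAt_fderiv_of_contDiffAt hG))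
  simp only [op, hfirst.eq_of_nhds, hsecond, sub_apply, mul_sub, Finset.sum_sub_distrib]
  ring

theorem op_conj_exp_mul (hF : ContDiffAt ℝ 2 F q) (L : SpaceTime m →L[ℝ] ℝ) :
    (K.conj L).op (fun r => Real.exp (L r) * F r) q = Real.exp (L q) * K.op F q := by
  simp only [op, conj, fderiv_exp_mul (hF.differentiableAt two_ne_zero),
    fderiv_fderiv_exp_mul hF, add_apply, smul_apply, smul_eq_mul,
    mul_left_comm _ (Real.exp _), ← Finset.mul_sum]
  linear_combination -Real.exp (L q) * sum_conj_diffusion_sub_sum_conj_drift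
    (fun i j => K.diffusion i j q.2)
    (fun i j => fderiv ℝ (fderiv ℝ F) q (spaceDir i) (spaceDir j)) (fun i => K.drift i q.2)
    (fun i => L (spaceDir i)) (fun i => fderiv ℝ F q (spaceDir i)) (F q)

theorem hasLineDerivAt_op (hF : ContDiffAt ℝ 3 F q) {v : SpaceTime m} (hv : v.2 = 0) :
    HasLineDerivAt ℝ (K.op F) (K.op (fun r => fderiv ℝ F r v) q) q v := by
  have hdF : ContDiffAt ℝ 2 (fderiv ℝ F) q := hF.fderiv_right (by norm_num)
  have hfirst : fderiv ℝ (fun r => fderiv ℝ F r v) =ᶠ[𝓝 q] fun r => fderiv ℝ (fderiv ℝ F) r v :=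
    (hF.eventually (by simp)).mono fun r hr => fderiv_fderiv_apply (hr.of_le (by norm_num)) v
  have hsecond (w z : SpaceTime m) : fderiv ℝ (fderiv ℝ fun r => fderiv ℝ F r v) q w z
      = fderiv ℝ (fderiv ℝ (fderiv ℝ F)) q v w z := by
    rw [hfirst.fderiv_eq, fderiv_fderiv_apply hdF]
  have hline {E : Type} [NormedAddCommGroup E] [NormedSpace ℝ E] {G : SpaceTime m → E}
      (hG : DifferentiableAt ℝ G q) :
      HasDerivAt (fun s : ℝ => G (q + s • v)) (fderiv ℝ G q v) 0 :=
    hG.hasFDerivAt.hasLineDerivAt v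
  have hline₁ (w : SpaceTime m) : HasDerivAt (fun s : ℝ => fderiv ℝ F (q + s • v) w)
      (fderiv ℝ (fderiv ℝ F) q v w) 0 := by
    simpa using (hline (hdF.differentiableAt two_ne_zero)).clm_apply (hasDerivAt_const 0 w)
  have hline₂ (w z : SpaceTime m) :
      HasDerivAt (fun s : ℝ => fderiv ℝ (fderiv ℝ F) (q + s • v) w z)
        (fderiv ℝ (fderiv ℝ (fderiv ℝ F)) q v w z) 0 := by
    simpa using ((hline (differentiableAt_fderiv_of_contDiffAt hdF)).clm_apply
      (hasDerivAt_const 0 w)).clm_apply (hasDerivAt_const 0 z)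
  simp only [HasLineDerivAt, op, hfirst.eq_of_nhds, hsecond, Prod.snd_add, Prod.smul_snd, hv,
    smul_zero, add_zero]
  refine (((hline₁ _).sub ?_).add ?_).add
    ((hline (hF.differentiableAt three_ne_zero)).const_mul _)
  · exact HasDerivAt.fun_sum fun i _ => HasDerivAt.fun_sum fun j _ => (hline₂ _ _).const_mul _
  · exact HasDerivAt.fun_sum fun i _ => (hline₁ _).const_mul _

end ParabolicCoeffs

theorem pd1_eq_fderiv {m : ℕ} {F : SpaceTime m → ℝ} {x : Fin m → ℝ} {t : ℝ}
    (hF : DifferentiableAt ℝ F (x, t)) (i : Fin m) :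
    pd1 i (fun y => F (y, t)) x = fderiv ℝ F (x, t) (spaceDir i) := by
  have h : HasFDerivAt (fun y => F (y, t)) _ x :=
    hF.hasFDerivAt.comp x (hasFDerivAt_prodMk_left (𝕜 := ℝ) x t)
  simp [pd1, h.fderiv, spaceDir]

theorem parabolicOp_eq_op {m : ℕ} {K : ParabolicCoeffs m} {F : SpaceTime m → ℝ}
    {x : Fin m → ℝ} {t : ℝ} (hF : ContDiffAt ℝ 2 F (x, t)) :
    parabolicOp K.diffusion K.drift K.potential (fun y s => F (y, s)) x t = K.op F (x, t) := by
  have hfirst (i : Fin m) : pd1 i (fun y => F (y, t)) x = fderiv ℝ F (x, t) (spaceDir i) :=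
    pd1_eq_fderiv (hF.differentiableAt two_ne_zero) i
  have hsecond (i j : Fin m) : pd2 i j (fun y => F (y, t)) x
      = fderiv ℝ (fderiv ℝ F) (x, t) (spaceDir i) (spaceDir j) := by
    have hdF := differentiableAt_fderiv_of_contDiffAt hF
    have hnear : (fun y => pd1 j (fun z => F (z, t)) y)
        =ᶠ[𝓝 x] fun y => fderiv ℝ F (y, t) (spaceDir j) :=
      ((Continuous.prodMk_left t).continuousAt.eventually
        (eventually_differentiableAt_of_contDiffAt hF)).mono fun y hy => pd1_eq_fderiv hy j
    rw [pd2, pd1, hnear.fderiv_eq, ← pd1,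
      pd1_eq_fderiv (F := fun r => fderiv ℝ F r (spaceDir j))
        (hdF.clm_apply (differentiableAt_const _)),
      fderiv_clm_apply hdF (differentiableAt_const _)]
    simp
  have htime : deriv (fun s => F (x, s)) t = fderiv ℝ F (x, t) (0, 1) :=
    ((hF.differentiableAt two_ne_zero).hasFDerivAt.comp_hasDerivAt t
      ((hasDerivAt_const t x).prodMk (hasDerivAt_id t))).deriv
  simp only [parabolicOp, ParabolicCoeffs.op, hfirst, hsecond, htime]

end Calculus

section MaximumPrinciple

theorem deriv_deriv_nonpos_of_isLocalMax {g : ℝ → ℝ} {a : ℝ} (hmax : IsLocalMax g a)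
    (hg : ContinuousAt g a) : deriv (deriv g) a ≤ 0 := by
  by_contra! hpos
  have hmin := isLocalMin_of_deriv_deriv_pos hpos hmax.deriv_eq_zero hg
  have hconst : g =ᶠ[𝓝 a] fun _ => g a := by
    filter_upwards [hmax, hmin] with s h₁ h₂ using le_antisymm h₁ h₂
  rw [hconst.deriv.deriv_eq] at hpos
  simp at hpos

theorem fderiv_fderiv_apply_self_nonpos {E : Type*} [NormedAddCommGroup E] [NormedSpace ℝ E]
    {Z : E → ℝ} {q v : E} (hZ : ContDiffAt ℝ 2 Z q)
    (hmax : IsLocalMax (fun s : ℝ => Z (q + s • v)) 0) :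
    fderiv ℝ (fderiv ℝ Z) q v v ≤ 0 := by
  have hline (s : ℝ) : HasDerivAt (fun s : ℝ => q + s • v) v s := by
    simpa using ((hasDerivAt_id s).smul_const v).const_add q
  have htendsto : Tendsto (fun s : ℝ => q + s • v) (𝓝 0) (𝓝 q) := by
    simpa using (hline 0).continuousAt.tendsto
  have hderiv : deriv (fun s : ℝ => Z (q + s • v)) =ᶠ[𝓝 0] fun s => fderiv ℝ Z (q + s • v) v := by
    filter_upwards [htendsto.eventually (eventually_differentiableAt_of_contDiffAt hZ)] with s hs
    exact (hs.hasFDerivAt.comp_hasDerivAt s (hline s)).deriv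
  have hderiv₂ : HasLineDerivAt ℝ (fun r => fderiv ℝ Z r v) (fderiv ℝ (fderiv ℝ Z) q v v) q v := by
    rw [← fderiv_fderiv_apply hZ v]
    exact ((differentiableAt_fderiv_of_contDiffAt hZ).clm_apply
      (differentiableAt_const v)).hasFDerivAt.hasLineDerivAt v
  have hcont : ContinuousAt (fun s : ℝ => Z (q + s • v)) 0 :=
    ContinuousAt.comp (by simpa using hZ.continuousAt) (hline 0).continuousAt
  rw [← hderiv₂.deriv, ← hderiv.deriv_eq]
  exact deriv_deriv_nonpos_of_isLocalMax hmax hcont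

theorem sum_mul_nonpos_of_posSemidef {ι : Type*} [Fintype ι] {A : Matrix ι ι ℝ}
    (hA : A.PosSemidef) {H : ι → ι → ℝ} (hH : ∀ ξ : ι → ℝ, ∑ i, ∑ j, ξ i * ξ j * H i j ≤ 0) :
    ∑ i, ∑ j, A i j * H i j ≤ 0 := by
  classical
  obtain ⟨m, v, rfl⟩ := Matrix.posSemidef_iff_eq_sum_vecMulVec.1 hA
  have hrank : ∑ i, ∑ j, (∑ k, Matrix.vecMulVec (v k) (star (v k))) i j * H i j
      = ∑ k, ∑ i, ∑ j, v k i * v k j * H i j := by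
    simp only [Matrix.sum_apply, Matrix.vecMulVec_apply, star_trivial, Finset.sum_mul]
    rw [Finset.sum_comm (s := Finset.univ (α := Fin m))]
    exact Finset.sum_congr rfl fun i _ => Finset.sum_comm
  rw [hrank]
  exact Finset.sum_nonpos fun k _ => hH (v k)

theorem sum_smul_spaceDir {m : ℕ} (ξ : Fin m → ℝ) :
    ∑ i, ξ i • spaceDir i = ((ξ, 0) : SpaceTime m) := by
  refine Prod.ext ?_ ?_
  · simp only [spaceDir, Prod.fst_sum, Prod.smul_mk]
    exact (pi_eq_sum_univ' ξ).symm
  · simp [spaceDir, Prod.snd_sum]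

namespace ParabolicCoeffs

variable {m : ℕ} {K : ParabolicCoeffs m}

/-- Degenerate parabolicity at the times in `J`, together with the sign condition on the
potential that the weak maximum principle requires. -/
structure IsDegenerateParabolicOn (K : ParabolicCoeffs m) (J : Set ℝ) : Prop where
  posSemidef : ∀ t ∈ J, (Matrix.of fun i j => K.diffusion i j t).PosSemidef
  potential_nonneg : ∀ t ∈ J, 0 ≤ K.potential t

theorem op_nonneg_of_isLocalMaxOn {J : Set ℝ} (hK : K.IsDegenerateParabolicOn J)
    {Z : SpaceTime m → ℝ} {q : SpaceTime m} (hq : q.2 ∈ J) (hZ : ContDiffAt ℝ 2 Z q)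
    (hpos : 0 ≤ Z q) (hmax : IsLocalMaxOn Z {r | r.2 ≤ q.2} q) : 0 ≤ K.op Z q := by
  have hspace (ξ : Fin m → ℝ) : IsLocalMax (fun s : ℝ => Z (q + s • (ξ, 0))) 0 := by
    have htendsto : Tendsto (fun s : ℝ => q + s • ((ξ, 0) : SpaceTime m)) (𝓝 0)
        (𝓝[{r | r.2 ≤ q.2}] q) := by
      refine tendsto_nhdsWithin_iff.2 ⟨?_, Eventually.of_forall fun s => by simp⟩
      exact Continuous.tendsto' (by fun_prop) _ _ (by simp)
    filter_upwards [htendsto.eventually hmax] with s hs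
    simpa using hs
  have hgradient (i : Fin m) : fderiv ℝ Z q (spaceDir i) = 0 :=
    (hspace (Pi.single i 1)).hasDerivAt_eq_zero
      ((hZ.differentiableAt two_ne_zero).hasFDerivAt.hasLineDerivAt (spaceDir i))
  have hhessian : ∑ i, ∑ j, K.diffusion i j q.2 *
      fderiv ℝ (fderiv ℝ Z) q (spaceDir i) (spaceDir j) ≤ 0 := by
    refine sum_mul_nonpos_of_posSemidef (hK.posSemidef q.2 hq) fun ξ => ?_
    have h := fderiv_fderiv_apply_self_nonpos hZ (hspace ξ)
    simp only [← sum_smul_spaceDir ξ, map_sum, map_smul, sum_apply, smul_apply, smul_eq_mul,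
      Finset.mul_sum] at h
    simp only [mul_assoc]
    rw [Finset.sum_comm]
    simpa only [mul_left_comm] using h
  have htime : 0 ≤ fderiv ℝ Z q (0, 1) := by
    have hcone : (0, -1) ∈ posTangentConeAt {r : SpaceTime m | r.2 ≤ q.2} q := by
      refine mem_posTangentConeAt_of_frequently_mem (Eventually.frequently ?_)
      filter_upwards [self_mem_nhdsWithin] with s hs
      simpa using le_of_lt hs
    have h := hmax.hasFDerivWithinAt_nonpos
      (hZ.differentiableAt two_ne_zero).hasFDerivAt.hasFDerivWithinAt hcone
    rw [show ((0, -1) : SpaceTime m) = -(0, 1) by simp, map_neg] at h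
    linarith
  have hpotential := mul_nonneg (hK.potential_nonneg q.2 hq) hpos
  simp only [op, hgradient, mul_zero, Finset.sum_const_zero, add_zero]
  linarith

variable {S : Set (Fin m → ℝ)} {T : ℝ} {Z : SpaceTime m → ℝ}

theorem nonpos_of_op_neg_of_lt (hK : K.IsDegenerateParabolicOn (Ioo 0 T)) (hSo : IsOpen S)
    (hSb : Bornology.IsBounded S) (hcont : ContinuousOn Z (closure S ×ˢ Icc 0 T))
    (hZ : ∀ q ∈ S ×ˢ Ioo 0 T, ContDiffAt ℝ 2 Z q) (hop : ∀ q ∈ S ×ˢ Ioo 0 T, K.op Z q < 0)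
    (hinit : ∀ x ∈ closure S, Z (x, 0) ≤ 0)
    (hlat : ∀ x ∈ frontier S, ∀ t ∈ Ioo 0 T,
      Z (x, t) ≤ 0 ∨ ¬ IsMaxOn (fun y => Z (y, t)) (closure S) x)
    {x : Fin m → ℝ} (hx : x ∈ closure S) {τ : ℝ} (hτ : τ ∈ Ico 0 T) : Z (x, τ) ≤ 0 := by
  by_contra! hneg
  obtain ⟨⟨x₀, t₀⟩, ⟨hx₀, ht₀⟩, hmax⟩ := (hSb.isCompact_closure.prod
    (isCompact_Icc (a := (0 : ℝ)) (b := τ))).exists_isMaxOn ⟨(x, τ), hx, hτ.1, le_rfl⟩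
    (hcont.mono (prod_mono_right (Icc_subset_Icc_right hτ.2.le)))
  have hle {y : Fin m → ℝ} (hy : y ∈ closure S) {s : ℝ} (hs : s ∈ Icc 0 τ) :
      Z (y, s) ≤ Z (x₀, t₀) := hmax (mk_mem_prod hy hs)
  have hpos : 0 < Z (x₀, t₀) := hneg.trans_le (hle hx ⟨hτ.1, le_rfl⟩)
  have ht₀pos : 0 < t₀ :=
    ht₀.1.lt_of_ne fun (h : 0 = t₀) => hpos.not_ge (h ▸ hinit x₀ hx₀)
  have ht₀T : t₀ ∈ Ioo 0 T := ⟨ht₀pos, ht₀.2.trans_lt hτ.2⟩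
  have hx₀S : x₀ ∈ S := by
    by_contra hx₀S
    rcases hlat x₀ ⟨hx₀, by rwa [hSo.interior_eq]⟩ t₀ ht₀T with h | h
    · exact hpos.not_ge h
    · exact h fun y hy => hle hy ht₀
  have hlocal : IsLocalMaxOn Z {r | r.2 ≤ t₀} (x₀, t₀) := by
    filter_upwards [self_mem_nhdsWithin, mem_nhdsWithin_of_mem_nhds
      ((hSo.prod isOpen_Ioi).mem_nhds (mk_mem_prod hx₀S (mem_Ioi.2 ht₀pos)))] with r hr₁ hr₂
    exact hle (subset_closure hr₂.1) ⟨le_of_lt hr₂.2, le_trans hr₁ ht₀.2⟩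
  exact (hop (x₀, t₀) ⟨hx₀S, ht₀T⟩).not_ge
    (op_nonneg_of_isLocalMaxOn hK ht₀T (hZ _ ⟨hx₀S, ht₀T⟩) hpos.le hlocal)

theorem nonpos_of_op_neg (hT : 0 < T) (hK : K.IsDegenerateParabolicOn (Ioo 0 T)) (hSo : IsOpen S)
    (hSb : Bornology.IsBounded S) (hcont : ContinuousOn Z (closure S ×ˢ Icc 0 T))
    (hZ : ∀ q ∈ S ×ˢ Ioo 0 T, ContDiffAt ℝ 2 Z q) (hop : ∀ q ∈ S ×ˢ Ioo 0 T, K.op Z q < 0)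
    (hinit : ∀ x ∈ closure S, Z (x, 0) ≤ 0)
    (hlat : ∀ x ∈ frontier S, ∀ t ∈ Ioo 0 T,
      Z (x, t) ≤ 0 ∨ ¬ IsMaxOn (fun y => Z (y, t)) (closure S) x)
    {x : Fin m → ℝ} (hx : x ∈ closure S) {t : ℝ} (ht : t ∈ Icc 0 T) : Z (x, t) ≤ 0 := by
  have hslice : ContinuousOn (fun s => Z (x, s)) (Icc 0 T) :=
    hcont.comp (by fun_prop) fun s hs => ⟨hx, hs⟩
  rw [← closure_Ico hT.ne] at ht hslice
  exact le_on_closure (fun τ hτ => nonpos_of_op_neg_of_lt hK hSo hSb hcont hZ hop hinit hlat hx hτ)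
    hslice continuousOn_const ht

end ParabolicCoeffs

end MaximumPrinciple

section Cylinder

variable {n : ℕ} {D : Set (Fin n → ℝ)} {a b : ℝ} {x : Fin (n + 1) → ℝ}

/-- The cylinder `D × (a, b)`, the last coordinate ranging over the interval. -/
def cylinder (D : Set (Fin n → ℝ)) (a b : ℝ) : Set (Fin (n + 1) → ℝ) :=
  {x | Fin.init x ∈ D ∧ x (Fin.last n) ∈ Ioo a b}

/-- The horizontal slice `D × {e}`; the faces of `cylinder D a b` are the slices at `a` and `b`. -/
def face (D : Set (Fin n → ℝ)) (e : ℝ) : Set (Fin (n + 1) → ℝ) :=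
  {x | Fin.init x ∈ D ∧ x (Fin.last n) = e}

theorem isOpen_cylinder (hD : IsOpen D) (a b : ℝ) : IsOpen (cylinder D a b) :=
  (hD.preimage (Continuous.finInit continuous_id)).inter
    (isOpen_Ioo.preimage (continuous_apply (Fin.last n)))

theorem mem_closure_cylinder (hab : a < b) :
    x ∈ closure (cylinder D a b) ↔ Fin.init x ∈ closure D ∧ x (Fin.last n) ∈ Icc a b := by
  refine ⟨fun hx => ?_, fun hx => ?_⟩
  · have hclosed : IsClosed {x : Fin (n + 1) → ℝ | (Fin.init x : Fin n → ℝ) ∈ closure D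
        ∧ x (Fin.last n) ∈ Icc a b} :=
      (isClosed_closure.preimage (Continuous.finInit continuous_id)).inter
        (isClosed_Icc.preimage (continuous_apply (Fin.last n)))
    have hsub : cylinder D a b ⊆ {x | Fin.init x ∈ closure D ∧ x (Fin.last n) ∈ Icc a b} :=
      fun _ hy => ⟨subset_closure hy.1, Ioo_subset_Icc_self hy.2⟩
    exact closure_minimal hsub hclosed hx
  · have hsnoc : Continuous fun q : (Fin n → ℝ) × ℝ => (Fin.snoc q.1 q.2 : Fin (n + 1) → ℝ) :=
      Continuous.finSnoc continuous_fst continuous_snd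
    have hmaps : MapsTo (fun q : (Fin n → ℝ) × ℝ => (Fin.snoc q.1 q.2 : Fin (n + 1) → ℝ))
        (D ×ˢ Ioo a b) (cylinder D a b) := fun q hq => by simpa [cylinder] using hq
    have hmem : (Fin.init x, x (Fin.last n)) ∈ closure (D ×ˢ Ioo a b) := by
      rwa [closure_prod_eq, closure_Ioo hab.ne]
    simpa using hmaps.closure hsnoc hmem

theorem isBounded_cylinder (hD : Bornology.IsBounded D) (a b : ℝ) :
    Bornology.IsBounded (cylinder D a b) := by
  have hsnoc : Continuous fun q : (Fin n → ℝ) × ℝ => (Fin.snoc q.1 q.2 : Fin (n + 1) → ℝ) :=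
    Continuous.finSnoc continuous_fst continuous_snd
  refine ((hD.isCompact_closure.prod isCompact_Icc).image hsnoc).isBounded.subset
    (t := (fun q : (Fin n → ℝ) × ℝ => (Fin.snoc q.1 q.2 : Fin (n + 1) → ℝ)) ''
      (closure D ×ˢ Icc a b)) fun x hx => ?_
  exact ⟨(Fin.init x, x (Fin.last n)), ⟨subset_closure hx.1, Ioo_subset_Icc_self hx.2⟩,
    Fin.snoc_init_self x⟩

theorem update_last_mem_closure_cylinder (hab : a < b) (hx : x ∈ closure (cylinder D a b))
    {s : ℝ} (hs : s ∈ Icc a b) :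
    Function.update x (Fin.last n) s ∈ closure (cylinder D a b) := by
  rw [mem_closure_cylinder hab] at hx ⊢
  simpa using ⟨hx.1, hs⟩

theorem face_subset_closure_cylinder (hab : a < b) {e : ℝ} (he : e ∈ Icc a b) :
    face D e ⊆ closure (cylinder D a b) := fun _ hx =>
  (mem_closure_cylinder hab).2 ⟨subset_closure hx.1, hx.2 ▸ he⟩

theorem mem_face_of_mem_frontier_cylinder (hab : a < b) (hD : IsOpen D)
    (hx : x ∈ frontier (cylinder D a b)) (hxD : Fin.init x ∈ D) :
    x ∈ face D a ∪ face D b := by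
  have hlast := ((mem_closure_cylinder hab).1 hx.1).2
  have hnot : x ∉ cylinder D a b := by
    simpa only [(isOpen_cylinder hD a b).interior_eq] using hx.2
  rcases hlast.1.eq_or_lt with h | h
  · exact Or.inl ⟨hxD, h.symm⟩
  · exact Or.inr ⟨hxD, hlast.2.eq_or_lt.resolve_right fun h' => hnot ⟨hxD, h, h'⟩⟩

end Cylinder

section Comparison

theorem mul_sub_nonpos_of_isMaxOn {g : ℝ → ℝ} {s : Set ℝ} {d e y : ℝ} (hs : Convex ℝ s)
    (he : e ∈ s) (hy : y ∈ s) (hg : HasDerivWithinAt g d s e) (hmax : IsMaxOn g s e) :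
    d * (y - e) ≤ 0 := by
  have h := hmax.localize.hasFDerivWithinAt_nonpos hg.hasFDerivWithinAt
    (sub_mem_posTangentConeAt_of_segment_subset (hs.segment_subset he hy))
  simpa [mul_comm] using h

theorem abs_mul_sub_le_of_abs_le {g w : ℝ → ℝ} {s : Set ℝ} {d d' e y : ℝ} (hs : Convex ℝ s)
    (he : e ∈ s) (hy : y ∈ s) (hg : HasDerivWithinAt g d s e) (hw : HasDerivWithinAt w d' s e)
    (hle : ∀ r ∈ s, |g r| ≤ w r) (hwe : w e = 0) : |d * (y - e)| ≤ d' * (y - e) := by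
  have hge : g e = 0 := abs_nonpos_iff.1 (hwe ▸ hle e he)
  have hupper := mul_sub_nonpos_of_isMaxOn hs he hy (hg.sub hw) fun r hr => by
    simpa [hge, hwe] using (le_abs_self _).trans (hle r hr)
  have hlower := mul_sub_nonpos_of_isMaxOn hs he hy (hg.neg.sub hw) fun r hr => by
    simpa [hge, hwe] using (neg_le_abs _).trans (hle r hr)
  exact abs_le.2 ⟨by linarith, by linarith⟩

theorem ParabolicCoeffs.op_comp_apply {m : ℕ} (K : ParabolicCoeffs m) {w : ℝ → ℝ}
    (hw : ContDiff ℝ 2 w) (k : Fin m) (q : SpaceTime m) :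
    K.op (fun r => w (r.1 k)) q = -(K.diffusion k k q.2 * deriv (deriv w) (q.1 k))
      + K.drift k q.2 * deriv w (q.1 k) + K.potential q.2 * w (q.1 k) := by
  let coord : SpaceTime m →L[ℝ] ℝ :=
    (ContinuousLinearMap.proj (R := ℝ) (φ := fun _ : Fin m => ℝ) k).comp
      (ContinuousLinearMap.fst ℝ (Fin m → ℝ) ℝ)
  have hcomp {g : ℝ → ℝ} (hg : Differentiable ℝ g) (r : SpaceTime m) :
      HasFDerivAt (fun r : SpaceTime m => g (r.1 k)) (deriv g (r.1 k) • coord) r :=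
    (hg _).hasDerivAt.comp_hasFDerivAt r coord.hasFDerivAt
  have hw' : Differentiable ℝ (deriv w) :=
    (hw.iterate_deriv' 1 1).differentiable one_ne_zero
  have hfirst : fderiv ℝ (fun r : SpaceTime m => w (r.1 k)) = fun r => deriv w (r.1 k) • coord :=
    funext fun r => (hcomp (hw.differentiable two_ne_zero) r).fderiv
  have hsecond (v v' : SpaceTime m) : fderiv ℝ (fun r => deriv w (r.1 k) • coord) q v v'
      = deriv (deriv w) (q.1 k) * coord v * coord v' := by
    simp [((hcomp hw' q).smul_const coord).fderiv]
  have hcoord (i : Fin m) : coord (spaceDir i) = if k = i then 1 else 0 := by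
    simp [coord, spaceDir, Pi.single_apply]
  simp [op, hfirst, hsecond, hcoord, show coord (0, 1) = 0 by simp [coord]]

/-- A nonnegative function of the last variable which is a strict supersolution of the operator on
`(a, b) × (0, T)`. -/
structure Barrier {n : ℕ} (K : ParabolicCoeffs (n + 1)) (T a b : ℝ) (w : ℝ → ℝ) : Prop where
  contDiff : ContDiff ℝ 2 w
  nonneg : ∀ s ∈ Icc a b, 0 ≤ w s
  super : ∀ t ∈ Ioo 0 T, ∀ s ∈ Ioo a b,
    0 < -(K.diffusion (Fin.last n) (Fin.last n) t * deriv (deriv w) s)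
      + K.drift (Fin.last n) t * deriv w s + K.potential t * w s

/-- A solution of the homogeneous equation on `D × (a, b) × (0, T)`, continuous up to the boundary,
with zero initial values and zero values on the lateral boundary `∂D × [a, b]`. -/
structure HomogeneousSolution {n : ℕ} (K : ParabolicCoeffs (n + 1)) (T : ℝ) (D : Set (Fin n → ℝ))
    (a b : ℝ) (G : SpaceTime (n + 1) → ℝ) : Prop where
  continuousOn : ContinuousOn G (closure (cylinder D a b) ×ˢ Icc 0 T)
  contDiffAt : ∀ q ∈ cylinder D a b ×ˢ Ioo 0 T, ContDiffAt ℝ 2 G q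
  op_eq_zero : ∀ q ∈ cylinder D a b ×ˢ Ioo 0 T, K.op G q = 0
  initial : ∀ x ∈ closure (cylinder D a b), G (x, 0) = 0
  lateral : ∀ x ∈ closure (cylinder D a b), Fin.init x ∉ D → ∀ t ∈ Ioo 0 T, G (x, t) = 0

/-- `V` is the derivative of `F` in the last space variable on the closed cylinder; at the two
faces it is the one-sided derivative. -/
def HasLastDeriv {n : ℕ} (T : ℝ) (D : Set (Fin n → ℝ)) (a b : ℝ)
    (F V : SpaceTime (n + 1) → ℝ) : Prop :=
  ∀ x ∈ closure (cylinder D a b), ∀ t ∈ Icc 0 T,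
    HasDerivWithinAt (fun s => F (Function.update x (Fin.last n) s, t)) (V (x, t)) (Icc a b)
      (x (Fin.last n))

variable {n : ℕ} {K : ParabolicCoeffs (n + 1)} {T : ℝ} {D : Set (Fin n → ℝ)} {a b : ℝ}
  {w : ℝ → ℝ} {F G V : SpaceTime (n + 1) → ℝ}

theorem Barrier.const_mul (h : Barrier K T a b w) {M : ℝ} (hM : 0 < M) :
    Barrier K T a b (fun s => M * w s) where
  contDiff := contDiff_const.mul h.contDiff
  nonneg s hs := mul_nonneg hM.le (h.nonneg s hs)
  super t ht s hs := by
    have hsuper := mul_pos hM (h.super t ht s hs)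
    have hderiv : deriv (fun s => M * w s) = fun s => M * deriv w s :=
      funext fun s => deriv_const_mul_field M
    simp only [hderiv, deriv_const_mul_field]
    linarith

namespace HomogeneousSolution

theorem neg (h : HomogeneousSolution K T D a b G) :
    HomogeneousSolution K T D a b (fun q => -G q) where
  continuousOn := h.continuousOn.neg
  contDiffAt q hq := (h.contDiffAt q hq).neg
  op_eq_zero q hq := by rw [K.op_neg, h.op_eq_zero q hq, neg_zero]
  initial x hx := by rw [h.initial x hx, neg_zero]
  lateral x hx hxD t ht := by rw [h.lateral x hx hxD t ht, neg_zero]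

/-- At a face the solution is controlled by the barrier itself or, through a point `y` of the
interval giving the inward direction, by the slope of the barrier. -/
theorem le_barrier (hT : 0 < T) (hK : K.IsDegenerateParabolicOn (Ioo 0 T)) (hDo : IsOpen D)
    (hDb : Bornology.IsBounded D) (hab : a < b) (hG : HomogeneousSolution K T D a b G)
    (hw : Barrier K T a b w)
    (hface : ∀ e ∈ ({a, b} : Set ℝ), ∀ x ∈ face D e, ∀ t ∈ Ioo 0 T, G (x, t) ≤ w e ∨
      ∃ d, HasDerivWithinAt (fun s => G (Function.update x (Fin.last n) s, t)) d (Icc a b) e ∧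
        ∃ y ∈ Icc a b, deriv w e * (y - e) < d * (y - e))
    {x : Fin (n + 1) → ℝ} (hx : x ∈ closure (cylinder D a b)) {t : ℝ} (ht : t ∈ Icc 0 T) :
    G (x, t) ≤ w (x (Fin.last n)) := by
  have hlast : ContDiff ℝ 2 fun q : SpaceTime (n + 1) => w (q.1 (Fin.last n)) :=
    hw.contDiff.comp (by fun_prop)
  have hnonneg (x) (hx : x ∈ closure (cylinder D a b)) : 0 ≤ w (x (Fin.last n)) :=
    hw.nonneg _ ((mem_closure_cylinder hab).1 hx).2
  refine sub_nonpos.1 (ParabolicCoeffs.nonpos_of_op_neg (Z := fun q => G q - w (q.1 (Fin.last n)))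
    hT hK (isOpen_cylinder hDo a b) (isBounded_cylinder hDb a b)
    (hG.continuousOn.sub hlast.continuous.continuousOn)
    (fun q hq => (hG.contDiffAt q hq).sub hlast.contDiffAt) (fun q hq => ?_) (fun x hx => ?_)
    (fun x hx t ht => ?_) hx ht)
  · rw [K.op_sub (hG.contDiffAt q hq) hlast.contDiffAt, hG.op_eq_zero q hq,
      K.op_comp_apply hw.contDiff, zero_sub, neg_lt_zero]
    exact hw.super q.2 hq.2 _ hq.1.2
  · simpa [hG.initial x hx] using hnonneg x hx
  · by_cases hxD : Fin.init x ∈ D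
    · obtain ⟨e, he, hxe⟩ : ∃ e ∈ ({a, b} : Set ℝ), x ∈ face D e := by
        simpa using mem_face_of_mem_frontier_cylinder hab hDo hx hxD
      have heI : e ∈ Icc a b := hxe.2 ▸ ((mem_closure_cylinder hab).1 hx.1).2
      rcases hface e he x hxe t ht with h | ⟨d, hd, y, hy, hlt⟩
      · exact Or.inl (by simpa [hxe.2] using h)
      · refine Or.inr fun hmax => ?_
        have hslope := mul_sub_nonpos_of_isMaxOn (convex_Icc a b) heI hy
          (hd.sub (hw.contDiff.differentiable two_ne_zero e).hasDerivAt.hasDerivWithinAt)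
          fun s hs => ?_
        · linarith
        · have := hmax (update_last_mem_closure_cylinder hab hx.1 hs)
          simpa [← hxe.2] using this
    · exact Or.inl (by simpa [hG.lateral x hx.1 hxD t ht] using hnonneg x hx.1)

theorem abs_le_barrier (hT : 0 < T) (hK : K.IsDegenerateParabolicOn (Ioo 0 T)) (hDo : IsOpen D)
    (hDb : Bornology.IsBounded D) (hab : a < b) (hG : HomogeneousSolution K T D a b G)
    (hw : Barrier K T a b w)
    (hface : ∀ e ∈ ({a, b} : Set ℝ), ∀ x ∈ face D e, ∀ t ∈ Ioo 0 T, |G (x, t)| ≤ w e ∨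
      ∃ d, HasDerivWithinAt (fun s => G (Function.update x (Fin.last n) s, t)) d (Icc a b) e ∧
        ∃ y ∈ Icc a b, |d| * |y - e| < deriv w e * (e - y))
    {x : Fin (n + 1) → ℝ} (hx : x ∈ closure (cylinder D a b)) {t : ℝ} (ht : t ∈ Icc 0 T) :
    |G (x, t)| ≤ w (x (Fin.last n)) := by
  refine abs_le'.2 ⟨hG.le_barrier hT hK hDo hDb hab hw (fun e he y hy s hs => ?_) hx ht,
    hG.neg.le_barrier hT hK hDo hDb hab hw (fun e he y hy s hs => ?_) hx ht⟩
  · refine (hface e he y hy s hs).imp ((le_abs_self _).trans ·) fun ⟨d, hd, z, hz, hlt⟩ =>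
      ⟨d, hd, z, hz, ?_⟩
    have := neg_abs_le (d * (z - e))
    rw [abs_mul] at this
    linarith
  · refine (hface e he y hy s hs).imp ((neg_le_abs _).trans ·) fun ⟨d, hd, z, hz, hlt⟩ =>
      ⟨-d, hd.neg, z, hz, ?_⟩
    have := le_abs_self (d * (z - e))
    rw [abs_mul] at this
    linarith

end HomogeneousSolution

namespace HasLastDeriv

theorem hasDerivWithinAt_face (hab : a < b) (hV : HasLastDeriv T D a b F V) {e : ℝ}
    (he : e ∈ Icc a b) {x : Fin (n + 1) → ℝ} (hx : x ∈ face D e) {t : ℝ} (ht : t ∈ Ioo 0 T) :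
    HasDerivWithinAt (fun s => F (Function.update x (Fin.last n) s, t)) (V (x, t)) (Icc a b) e := by
  simpa only [hx.2] using
    hV x (face_subset_closure_cylinder hab he hx) t (Ioo_subset_Icc_self ht)

theorem eq_zero_of_forall_eq_zero (hab : a < b) (hV : HasLastDeriv T D a b F V)
    {x : Fin (n + 1) → ℝ} (hx : x ∈ closure (cylinder D a b)) {t : ℝ} (ht : t ∈ Icc 0 T)
    (hF : ∀ s ∈ Icc a b, F (Function.update x (Fin.last n) s, t) = 0) : V (x, t) = 0 := by
  have hlast := ((mem_closure_cylinder hab).1 hx).2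
  exact (uniqueDiffOn_Icc hab _ hlast).eq_deriv _ (hV x hx t ht)
    ((hasDerivWithinAt_const _ _ 0).congr hF (hF _ hlast))

theorem eq_fderiv (hV : HasLastDeriv T D a b F V) {q : SpaceTime (n + 1)}
    (hF : DifferentiableAt ℝ F q) (hq : q ∈ cylinder D a b ×ˢ Ioo 0 T) :
    V q = fderiv ℝ F q (spaceDir (Fin.last n)) := by
  have hV' := (hV q.1 (subset_closure hq.1) q.2 (Ioo_subset_Icc_self hq.2)).hasDerivAt
    (Icc_mem_nhds hq.1.2.1 hq.1.2.2)
  have hline := (hasDerivAt_update q.1 (Fin.last n) (q.1 (Fin.last n))).prodMk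
    (hasDerivAt_const (q.1 (Fin.last n)) q.2)
  exact hV'.unique (hF.hasFDerivAt.comp_hasDerivAt_of_eq _ hline (by simp))

end HasLastDeriv

/-- A homogeneous solution `F`, of class `C³` inside the cylinder, together with its derivative `V`
in the last variable, which is required to be continuous up to the boundary. -/
structure HomogeneousSolutionWithDeriv {n : ℕ} (K : ParabolicCoeffs (n + 1)) (T : ℝ)
    (D : Set (Fin n → ℝ)) (a b : ℝ) (F V : SpaceTime (n + 1) → ℝ) : Prop
    extends HomogeneousSolution K T D a b F where
  contDiffAt_three : ∀ q ∈ cylinder D a b ×ˢ Ioo 0 T, ContDiffAt ℝ 3 F q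
  hasLastDeriv : HasLastDeriv T D a b F V
  continuousOn_lastDeriv : ContinuousOn V (closure (cylinder D a b) ×ˢ Icc 0 T)

namespace HomogeneousSolutionWithDeriv

-- The coefficients depend on time only, so the equation may be differentiated in space.
theorem lastDeriv (hT : 0 < T) (hDo : IsOpen D) (hab : a < b)
    (h : HomogeneousSolutionWithDeriv K T D a b F V) : HomogeneousSolution K T D a b V := by
  have hnhds {q} (hq : q ∈ cylinder D a b ×ˢ Ioo 0 T) : cylinder D a b ×ˢ Ioo 0 T ∈ 𝓝 q :=
    ((isOpen_cylinder hDo a b).prod isOpen_Ioo).mem_nhds hq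
  have hV {q} (hq : q ∈ cylinder D a b ×ˢ Ioo 0 T) :
      V =ᶠ[𝓝 q] fun r => fderiv ℝ F r (spaceDir (Fin.last n)) := by
    filter_upwards [hnhds hq] with r hr
    exact h.hasLastDeriv.eq_fderiv ((h.contDiffAt r hr).differentiableAt two_ne_zero) hr
  refine ⟨h.continuousOn_lastDeriv, fun q hq => ?_, fun q hq => ?_, fun x hx => ?_,
    fun x hx hxD t ht => ?_⟩
  · exact (((h.contDiffAt_three q hq).fderiv_right (by norm_num)).clm_apply
      contDiffAt_const).congr_of_eventuallyEq (hV hq)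
  · have hzero : K.op F =ᶠ[𝓝 q] fun _ => 0 := by
      filter_upwards [hnhds hq] with r hr using h.op_eq_zero r hr
    rw [K.op_congr (hV hq)]
    refine (K.hasLineDerivAt_op (h.contDiffAt_three q hq) rfl).unique
      (HasLineDerivAt.congr_of_eventuallyEq ?_ hzero)
    simpa using (hasFDerivAt_const (0 : ℝ) q).hasLineDerivAt (spaceDir (Fin.last n))
  · exact h.hasLastDeriv.eq_zero_of_forall_eq_zero hab hx ⟨le_rfl, hT.le⟩ fun s hs =>
      h.initial _ (update_last_mem_closure_cylinder hab hx hs)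
  · exact h.hasLastDeriv.eq_zero_of_forall_eq_zero hab hx (Ioo_subset_Icc_self ht) fun s hs =>
      h.lateral _ (update_last_mem_closure_cylinder hab hx hs) (by simpa using hxD) t ht

end HomogeneousSolutionWithDeriv

theorem hasDerivAt_one_sub_exp (η e s : ℝ) :
    HasDerivAt (fun s => 1 - Real.exp (-(η * (s - e)))) (η * Real.exp (-(η * (s - e)))) s := by
  have h := ((((hasDerivAt_id s).sub_const e).const_mul η).fun_neg.exp).const_sub 1
  exact h.congr_deriv (by simp only [id_eq]; ring)

theorem barrier_one_sub_exp {η e : ℝ} (hK : ∀ t ∈ Ioo 0 T, 0 ≤ K.potential t)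
    (hdrift : ∀ t ∈ Ioo 0 T,
      |K.drift (Fin.last n) t| < |η| * K.diffusion (Fin.last n) (Fin.last n) t)
    (hη : η ≠ 0) (hside : ∀ s ∈ Icc a b, 0 ≤ η * (s - e)) :
    Barrier K T a b (fun s => 1 - Real.exp (-(η * (s - e)))) := by
  have hnonneg (s) (hs : s ∈ Icc a b) : 0 ≤ 1 - Real.exp (-(η * (s - e))) :=
    sub_nonneg.2 (Real.exp_le_one_iff.2 (neg_nonpos.2 (hside s hs)))
  refine ⟨by fun_prop, hnonneg, fun t ht s hs => ?_⟩
  have hfirst : deriv (fun s => 1 - Real.exp (-(η * (s - e))))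
      = fun s => η * Real.exp (-(η * (s - e))) :=
    funext fun s => (hasDerivAt_one_sub_exp η e s).deriv
  have hsecond : deriv (fun s => η * Real.exp (-(η * (s - e)))) s
      = -(η ^ 2 * Real.exp (-(η * (s - e)))) := by
    rw [((((hasDerivAt_one_sub_exp η e s).const_sub 1).const_mul η).congr_of_eventuallyEq
      (Eventually.of_forall fun s => by simp)).deriv]
    ring
  have hslope : 0 < η ^ 2 * K.diffusion (Fin.last n) (Fin.last n) t
      + K.drift (Fin.last n) t * η := by
    have h := mul_lt_mul_of_pos_left (hdrift t ht) (abs_pos.2 hη)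
    rw [← mul_assoc, abs_mul_abs_self, ← abs_mul, mul_comm η (K.drift _ t)] at h
    linarith [neg_abs_le (K.drift (Fin.last n) t * η)]
  rw [hfirst, hsecond]
  linarith [mul_pos hslope (Real.exp_pos (-(η * (s - e)))),
    mul_nonneg (hK t ht) (hnonneg s (Ioo_subset_Icc_self hs))]

theorem mem_Icc_and_mem_Icc_of_pair_eq {e y : ℝ} (hab : a < b)
    (hfaces : ({e, y} : Set ℝ) = {a, b}) : e ∈ Icc a b ∧ y ∈ Icc a b := by
  rw [← pair_subset_iff, hfaces]
  exact pair_subset (left_mem_Icc.2 hab.le) (right_mem_Icc.2 hab.le)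

theorem abs_sub_pos_of_pair_eq {e y : ℝ} (hab : a < b) (hfaces : ({e, y} : Set ℝ) = {a, b}) :
    0 < |y - e| := by
  rcases pair_eq_pair_iff.1 hfaces with ⟨rfl, rfl⟩ | ⟨rfl, rfl⟩
  · exact abs_pos.2 (sub_pos.2 hab).ne'
  · exact abs_pos.2 (sub_neg.2 hab).ne

theorem mul_sub_nonneg_of_pair_eq {e y η s : ℝ} (hab : a < b) (hfaces : ({e, y} : Set ℝ) = {a, b})
    (hη : 0 < η * (y - e)) (hs : s ∈ Icc a b) : 0 ≤ η * (s - e) := by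
  rcases pair_eq_pair_iff.1 hfaces with ⟨rfl, rfl⟩ | ⟨rfl, rfl⟩
  · exact mul_nonneg (pos_of_mul_pos_left hη (sub_pos.2 hab).le).le (sub_nonneg.2 hs.1)
  · exact mul_nonneg_of_nonpos_of_nonpos
      (neg_of_mul_pos_left hη (sub_neg.2 hab).le).le (sub_nonpos.2 hs.2)

namespace HomogeneousSolutionWithDeriv

variable {e y η m : ℝ} {x : Fin (n + 1) → ℝ} {t : ℝ}

theorem abs_le_of_dirichlet (hT : 0 < T) (hK : K.IsDegenerateParabolicOn (Ioo 0 T))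
    (hDo : IsOpen D) (hDb : Bornology.IsBounded D) (hab : a < b)
    (h : HomogeneousSolutionWithDeriv K T D a b F V) (hfaces : ({e, y} : Set ℝ) = {a, b})
    (hη : 0 < η * (y - e)) (hdrift : ∀ t ∈ Ioo 0 T,
      |K.drift (Fin.last n) t| < |η| * K.diffusion (Fin.last n) (Fin.last n) t)
    (hm : 0 < m) (hF : ∀ x ∈ face D e, ∀ t ∈ Ioo 0 T, F (x, t) = 0)
    (hV : ∀ x ∈ face D y, ∀ t ∈ Ioo 0 T, |V (x, t)| ≤ m)
    (hx : x ∈ closure (cylinder D a b)) (ht : t ∈ Icc 0 T) :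
    |F (x, t)| ≤ 2 * m * Real.exp (η * (y - e)) / |η|
      * (1 - Real.exp (-(η * (x (Fin.last n) - e)))) := by
  have hη₀ : η ≠ 0 := left_ne_zero_of_mul hη.ne'
  have hye : 0 < |y - e| := abs_pos.2 (right_ne_zero_of_mul hη.ne')
  obtain ⟨heI, hyI⟩ := mem_Icc_and_mem_Icc_of_pair_eq hab hfaces
  set M : ℝ := 2 * m * Real.exp (η * (y - e)) / |η| with hM
  have hw : Barrier K T a b (fun s => M * (1 - Real.exp (-(η * (s - e))))) :=
    (barrier_one_sub_exp hK.potential_nonneg hdrift hη₀ fun s hs =>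
      mul_sub_nonneg_of_pair_eq hab hfaces hη hs).const_mul (by positivity)
  refine h.abs_le_barrier hT hK hDo hDb hab hw (fun e' he' x hx t ht => ?_) hx ht
  obtain rfl | rfl : e' = e ∨ e' = y := by simpa using hfaces.ge he'
  · exact Or.inl (by simp [hF x hx t ht])
  · refine Or.inr ⟨_, h.hasLastDeriv.hasDerivWithinAt_face hab hyI hx ht, e, heI, ?_⟩
    have hcancel : Real.exp (η * (e' - e)) * Real.exp (-(η * (e' - e))) = 1 := by
      rw [← Real.exp_add, add_neg_cancel, Real.exp_zero]
    have hMη : M * (η * (e' - e)) = 2 * m * Real.exp (η * (e' - e)) * |e' - e| := by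
      rw [hM, ← abs_of_pos hη, abs_mul]
      field_simp
    calc |V (x, t)| * |e - e'| ≤ m * |e' - e| := by rw [abs_sub_comm]; gcongr; exact hV x hx t ht
      _ < 2 * m * |e' - e| := by linarith [mul_pos hm hye]
      _ = M * (η * Real.exp (-(η * (e' - e)))) * (e' - e) := by
        linear_combination -Real.exp (-(η * (e' - e))) * hMη - 2 * m * |e' - e| * hcancel
      _ = _ := by rw [((hasDerivAt_one_sub_exp η e e').const_mul M).deriv]

theorem abs_lastDeriv_le_of_dirichlet (hT : 0 < T) (hK : K.IsDegenerateParabolicOn (Ioo 0 T))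
    (hDo : IsOpen D) (hDb : Bornology.IsBounded D) (hab : a < b)
    (h : HomogeneousSolutionWithDeriv K T D a b F V) (hfaces : ({e, y} : Set ℝ) = {a, b})
    (hη : 0 < η * (y - e)) (hdrift : ∀ t ∈ Ioo 0 T,
      |K.drift (Fin.last n) t| < |η| * K.diffusion (Fin.last n) (Fin.last n) t)
    (hm : 0 < m) (hF : ∀ x ∈ face D e, ∀ t ∈ Ioo 0 T, F (x, t) = 0)
    (hV : ∀ x ∈ face D y, ∀ t ∈ Ioo 0 T, |V (x, t)| ≤ m) (hx : x ∈ face D e) (ht : t ∈ Ioo 0 T) :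
    |V (x, t)| ≤ m * (2 * Real.exp (η * (y - e))) := by
  have hη₀ : 0 < |η| := abs_pos.2 (left_ne_zero_of_mul hη.ne')
  have hye : 0 < |y - e| := abs_pos.2 (right_ne_zero_of_mul hη.ne')
  obtain ⟨heI, hyI⟩ := mem_Icc_and_mem_Icc_of_pair_eq hab hfaces
  have hslope := abs_mul_sub_le_of_abs_le (convex_Icc a b) heI hyI
    (h.hasLastDeriv.hasDerivWithinAt_face hab heI hx ht)
    ((hasDerivAt_one_sub_exp η e e).const_mul
      (2 * m * Real.exp (η * (y - e)) / |η|)).hasDerivWithinAt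
    (fun s hs => by
      simpa using h.abs_le_of_dirichlet hT hK hDo hDb hab hfaces hη hdrift hm hF hV
        (update_last_mem_closure_cylinder hab (face_subset_closure_cylinder hab heI hx) hs)
        (Ioo_subset_Icc_self ht)) (by simp)
  rw [abs_mul] at hslope
  refine le_of_mul_le_mul_right (hslope.trans_eq ?_) hye
  simp only [sub_self, mul_zero, neg_zero, Real.exp_zero, mul_one]
  rw [mul_assoc, ← abs_of_pos hη, abs_mul]
  field_simp

end HomogeneousSolutionWithDeriv

end Comparison

section Regularity

variable {n : ℕ} {T : ℝ} {D : Set (Fin n → ℝ)} {a b : ℝ} {F G V W : SpaceTime (n + 1) → ℝ}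

/-- The derivative in the last space variable, taken within `S`. -/
noncomputable def lastDerivWithin (S : Set (Fin (n + 1) → ℝ)) (F : SpaceTime (n + 1) → ℝ)
    (q : SpaceTime (n + 1)) : ℝ :=
  fderivWithin ℝ (fun y => F (y, q.2)) S q.1 (Pi.single (Fin.last n) 1)

theorem hasDerivAt_update_last (q : SpaceTime (n + 1)) :
    HasDerivAt (fun s => (Function.update q.1 (Fin.last n) s, q.2))
      (spaceDir (Fin.last n)) (q.1 (Fin.last n)) :=
  (hasDerivAt_update q.1 (Fin.last n) (q.1 (Fin.last n))).prodMk
    (hasDerivAt_const (q.1 (Fin.last n)) q.2)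

theorem hasLastDeriv_lastDerivWithin (hab : a < b)
    (hF : DifferentiableOn ℝ F (closure (cylinder D a b) ×ˢ Icc 0 T)) :
    HasLastDeriv T D a b F (lastDerivWithin (closure (cylinder D a b)) F) := by
  intro x hx t ht
  have hslice : DifferentiableWithinAt ℝ (fun y => F (y, t)) (closure (cylinder D a b)) x :=
    (hF (x, t) ⟨hx, ht⟩).comp x (f := fun y => (y, t)) (by fun_prop) fun y hy => ⟨hy, ht⟩
  exact hslice.hasFDerivWithinAt.comp_hasDerivWithinAt_of_eq (x (Fin.last n))
    (hasDerivAt_update x (Fin.last n) (x (Fin.last n))).hasDerivWithinAt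
    (fun s hs => update_last_mem_closure_cylinder hab hx hs) (by simp)

namespace HasLastDeriv

theorem unique (hab : a < b) (hV : HasLastDeriv T D a b F V) (hW : HasLastDeriv T D a b F W)
    {x : Fin (n + 1) → ℝ} (hx : x ∈ closure (cylinder D a b)) {t : ℝ} (ht : t ∈ Icc 0 T) :
    V (x, t) = W (x, t) :=
  (uniqueDiffOn_Icc hab _ ((mem_closure_cylinder hab).1 hx).2).eq_deriv _ (hV x hx t ht)
    (hW x hx t ht)

theorem mono {a' b' : ℝ} (hV : HasLastDeriv T D a b F V)
    (hsub : cylinder D a' b' ⊆ cylinder D a b) (hIcc : Icc a' b' ⊆ Icc a b) :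
    HasLastDeriv T D a' b' F V := fun x hx t ht =>
  (hV x (closure_mono hsub hx) t ht).mono hIcc

theorem sub (hV : HasLastDeriv T D a b F V) (hW : HasLastDeriv T D a b G W) :
    HasLastDeriv T D a b (fun q => F q - G q) (fun q => V q - W q) :=
  fun x hx t ht => (hV x hx t ht).fun_sub (hW x hx t ht)

theorem exp_mul (hV : HasLastDeriv T D a b F V) (L : SpaceTime (n + 1) →L[ℝ] ℝ) :
    HasLastDeriv T D a b (fun q => Real.exp (L q) * F q)
      (fun q => Real.exp (L q) * (V q + L (spaceDir (Fin.last n)) * F q)) := by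
  intro x hx t ht
  refine (((L.hasFDerivAt.comp_hasDerivWithinAt (x (Fin.last n))
    (hasDerivAt_update_last (x, t)).hasDerivWithinAt).exp).mul (hV x hx t ht)).congr_deriv ?_
  simp only [Function.comp_apply, Function.update_eq_self]
  ring

end HasLastDeriv

theorem continuousOn_lastDerivWithin (hab : a < b)
    (hF : ContDiffOn ℝ 1 F (closure (cylinder D a b) ×ˢ Icc 0 T)) :
    ContinuousOn (lastDerivWithin (closure (cylinder D a b)) F)
      (closure (cylinder D a b) ×ˢ Icc 0 T) := by
  intro q hq
  obtain ⟨u, hu, hus, -, F', hF', hcont⟩ :=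
    (contDiffWithinAt_succ_iff_hasFDerivWithinAt' (n := 0) (by simp)).1 (by simpa using hF q hq)
  rw [insert_eq_of_mem hq] at hu hus
  have heq (r) (hr : r ∈ u) : lastDerivWithin (closure (cylinder D a b)) F r
      = F' r (spaceDir (Fin.last n)) := by
    have hrs := hus hr
    have hline := (hF' r hr).comp_hasDerivWithinAt_of_eq (r.1 (Fin.last n))
      (hasDerivAt_update_last r).hasDerivWithinAt
      (fun s hs => ⟨update_last_mem_closure_cylinder hab hrs.1 hs, hrs.2⟩) (by simp)
    exact (uniqueDiffOn_Icc hab _ ((mem_closure_cylinder hab).1 hrs.1).2).eq_deriv _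
      (hasLastDeriv_lastDerivWithin hab (hF.differentiableOn one_ne_zero) r.1 hrs.1 r.2 hrs.2) hline
  refine (hcont.continuousWithinAt.clm_apply
    (continuousWithinAt_const (b := spaceDir (Fin.last n)))).congr_of_eventuallyEq ?_
    (heq q (mem_of_mem_nhdsWithin hq hu))
  filter_upwards [hu] with r hr using heq r hr

end Regularity

section Decomposition

/-- Overlapping intervals `(a l, b l)`, `1 ≤ l ≤ I`, each of which overlaps its neighbours. -/
structure OverlappingIntervals (I : ℕ) (a b : ℕ → ℝ) : Prop where
  two_le : 2 ≤ I
  overlap : ∀ l, 1 ≤ l → l + 1 ≤ I → a l < a (l + 1) ∧ a (l + 1) < b l ∧ b l < b (l + 1)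

/-- `Interface I a b l e y l'` means that the end `e` of the `l`-th interval, whose other end is
`y`, lies in the neighbouring `l'`-th interval. -/
inductive Interface (I : ℕ) (a b : ℕ → ℝ) : ℕ → ℝ → ℝ → ℕ → Prop
  | left {l : ℕ} : 1 ≤ l → l + 1 ≤ I → Interface I a b (l + 1) (a (l + 1)) (b (l + 1)) l
  | right {l : ℕ} : 1 ≤ l → l + 1 ≤ I → Interface I a b l (b l) (a l) (l + 1)

/-- `OuterEnd I a b l e y` means that `e` is an end of the union of the intervals: the left end of
the first or the right end of the last interval, the other end of which is `y`. -/
inductive OuterEnd (I : ℕ) (a b : ℕ → ℝ) : ℕ → ℝ → ℝ → Prop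
  | first : OuterEnd I a b 1 (a 1) (b 1)
  | last : OuterEnd I a b I (b I) (a I)

variable {I : ℕ} {a b : ℕ → ℝ} {l l' : ℕ} {e y : ℝ}

namespace Interface

theorem mem_Icc (h : Interface I a b l e y l') : l ∈ Icc 1 I ∧ l' ∈ Icc 1 I := by
  cases h with
  | left h₁ h₂ | right h₁ h₂ => simp only [Set.mem_Icc]; omega

theorem pair_eq (h : Interface I a b l e y l') : ({e, y} : Set ℝ) = {a l, b l} := by
  cases h with
  | left => rfl
  | right => exact pair_comm _ _

theorem eventually_forall {ι : Type*} {f : Filter ι} {P : ι → ℕ → ℝ → ℝ → ℕ → Prop}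
    (h : ∀ {l e y l'}, Interface I a b l e y l' → ∀ᶠ i in f, P i l e y l') :
    ∀ᶠ i in f, ∀ {l e y l'}, Interface I a b l e y l' → P i l e y l' := by
  have hleft : ∀ᶠ i in f, ∀ l ∈ Finset.Ico 1 I, P i (l + 1) (a (l + 1)) (b (l + 1)) l :=
    (eventually_all_finset _).2 fun l hl =>
      h (.left (Finset.mem_Ico.1 hl).1 (Finset.mem_Ico.1 hl).2)
  have hright : ∀ᶠ i in f, ∀ l ∈ Finset.Ico 1 I, P i l (b l) (a l) (l + 1) :=
    (eventually_all_finset _).2 fun l hl =>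
      h (.right (Finset.mem_Ico.1 hl).1 (Finset.mem_Ico.1 hl).2)
  filter_upwards [hleft, hright] with i hli hri l e y l' hint
  cases hint with
  | left h₁ h₂ => exact hli _ (Finset.mem_Ico.2 ⟨h₁, h₂⟩)
  | right h₁ h₂ => exact hri _ (Finset.mem_Ico.2 ⟨h₁, h₂⟩)

end Interface

theorem OuterEnd.pair_eq (h : OuterEnd I a b l e y) : ({e, y} : Set ℝ) = {a l, b l} := by
  cases h with
  | first => rfl
  | last => exact pair_comm _ _

theorem OuterEnd.eventually_forall {ι : Type*} {f : Filter ι} {P : ι → ℕ → ℝ → ℝ → Prop}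
    (h : ∀ {l e y}, OuterEnd I a b l e y → ∀ᶠ i in f, P i l e y) :
    ∀ᶠ i in f, ∀ {l e y}, OuterEnd I a b l e y → P i l e y := by
  filter_upwards [h .first, h .last] with i hfirst hlast l e y hend
  cases hend with
  | first => exact hfirst
  | last => exact hlast

namespace OverlappingIntervals

theorem lt (hI : OverlappingIntervals I a b) (hl : l ∈ Icc 1 I) : a l < b l := by
  rcases hl.2.lt_or_eq with h | rfl
  · have := hI.overlap l hl.1 h
    linarith
  · obtain ⟨j, rfl⟩ : ∃ j, l = j + 1 := ⟨l - 1, by have := hl.1; omega⟩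
    have := hI.overlap j (by have := hI.two_le; omega) le_rfl
    linarith

theorem first_le (hI : OverlappingIntervals I a b) (hl : l ∈ Icc 1 I) : a 1 ≤ a l := by
  obtain ⟨h₁, h₂⟩ := hl
  induction l, h₁ using Nat.le_induction with
  | base => exact le_rfl
  | succ j hj ih => exact (ih (by omega)).trans (hI.overlap j hj h₂).1.le

theorem le_last (hI : OverlappingIntervals I a b) (hl : l ∈ Icc 1 I) : b l ≤ b I := by
  obtain ⟨h₁, h₂⟩ := hl
  induction h₂ using Nat.decreasingInduction with
  | self => exact le_rfl
  | of_succ j hj ih => exact (hI.overlap j h₁ hj).2.2.le.trans (ih (by omega))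

theorem first_lt_last (hI : OverlappingIntervals I a b) : a 1 < b I :=
  have hfirst : 1 ∈ Icc 1 I := ⟨le_rfl, by have := hI.two_le; omega⟩
  (hI.lt hfirst).trans_le (hI.le_last hfirst)

theorem mem_Icc_of_interface (hI : OverlappingIntervals I a b) (h : Interface I a b l e y l') :
    e ∈ Icc (a l') (b l') := by
  cases h with
  | left h₁ h₂ =>
    have := hI.overlap l' h₁ h₂
    exact ⟨this.1.le, this.2.1.le⟩
  | right h₁ h₂ =>
    have := hI.overlap l h₁ h₂
    exact ⟨this.2.1.le, this.2.2.le⟩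

theorem mem_Icc_of_outerEnd (hI : OverlappingIntervals I a b) (h : OuterEnd I a b l e y) :
    l ∈ Icc 1 I := by
  have := hI.two_le
  cases h with
  | first | last => simp only [Set.mem_Icc]; omega

theorem exists_interface_of_outerEnd (hI : OverlappingIntervals I a b)
    (h : OuterEnd I a b l e y) : ∃ l', Interface I a b l y e l' := by
  have := hI.two_le
  cases h with
  | first => exact ⟨2, .right le_rfl hI.two_le⟩
  | last =>
    obtain ⟨j, rfl⟩ : ∃ j, I = j + 1 := ⟨I - 1, by omega⟩
    exact ⟨j, .left (by omega) le_rfl⟩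

theorem exists_interface_or_outerEnd (hI : OverlappingIntervals I a b) (hl : l ∈ Icc 1 I)
    (he : e ∈ ({a l, b l} : Set ℝ)) :
    ∃ y, (∃ l', Interface I a b l e y l') ∨ OuterEnd I a b l e y := by
  rcases he with rfl | rfl
  · rcases hl.1.eq_or_lt with rfl | h
    · exact ⟨_, .inr .first⟩
    · obtain ⟨j, rfl⟩ : ∃ j, l = j + 1 := ⟨l - 1, by omega⟩
      exact ⟨_, .inl ⟨j, .left (by omega) hl.2⟩⟩
  · rcases hl.2.eq_or_lt with rfl | h
    · exact ⟨_, .inr .last⟩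
    · exact ⟨_, .inl ⟨l + 1, .right hl.1 h⟩⟩

end OverlappingIntervals

end Decomposition

section Iteration

variable {n : ℕ} {K : ParabolicCoeffs (n + 1)} {T κ θ m : ℝ} {D : Set (Fin n → ℝ)} {I : ℕ}
  {a b : ℕ → ℝ} {w : ℕ → ℝ → ℝ} {F V V' : ℕ → SpaceTime (n + 1) → ℝ}

/-- On each closed cylinder `D × [a l, b l] × [0, T]`, `|V l|` is at most `m` times the profile
`w l` of the last variable. -/
def DominatedBy (T : ℝ) (D : Set (Fin n → ℝ)) (I : ℕ) (a b : ℕ → ℝ)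
    (V : ℕ → SpaceTime (n + 1) → ℝ) (m : ℝ) (w : ℕ → ℝ → ℝ) : Prop :=
  ∀ l ∈ Icc 1 I, ∀ x ∈ closure (cylinder D (a l) (b l)), ∀ t ∈ Icc 0 T,
    |V l (x, t)| ≤ m * w l (x (Fin.last n))

/-- At every interface, `V` takes over the values of `V'` on the neighbouring cylinder. -/
def Transmits (T : ℝ) (D : Set (Fin n → ℝ)) (I : ℕ) (a b : ℕ → ℝ)
    (V V' : ℕ → SpaceTime (n + 1) → ℝ) : Prop :=
  ∀ {l e y l'}, Interface I a b l e y l' → ∀ x ∈ face D e, ∀ t ∈ Ioo 0 T, V l (x, t) = V' l' (x, t)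

/-- Homogeneous solutions `F l` on the subdomains, with derivatives `V l` in the last variable,
which vanish at the two outer faces of the decomposition. -/
structure ErrorFamily (K : ParabolicCoeffs (n + 1)) (T : ℝ) (D : Set (Fin n → ℝ)) (I : ℕ)
    (a b : ℕ → ℝ) (F V : ℕ → SpaceTime (n + 1) → ℝ) : Prop where
  solution : ∀ l ∈ Icc 1 I, HomogeneousSolutionWithDeriv K T D (a l) (b l) (F l) (V l)
  outer : ∀ {l e y}, OuterEnd I a b l e y → ∀ x ∈ face D e, ∀ t ∈ Ioo 0 T, F l (x, t) = 0

/-- Positive barriers on overlapping intervals, normalised at the interfaces and at most `θ` where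
a neighbour has its interface. The slope at the interfaces makes a Neumann bound usable, and the
size `exp (κ |y - e|)` at the outer ends is the loss in `abs_lastDeriv_le_of_dirichlet`. -/
structure BarrierFamily (K : ParabolicCoeffs (n + 1)) (T κ θ : ℝ) (I : ℕ) (a b : ℕ → ℝ)
    (w : ℕ → ℝ → ℝ) : Prop where
  barrier : ∀ l ∈ Icc 1 I, Barrier K T (a l) (b l) (w l)
  pos : ∀ l s, 0 < w l s
  eq_one : ∀ {l e y l'}, Interface I a b l e y l' → w l e = 1
  slope : ∀ {l e y l'}, Interface I a b l e y l' → |y - e| < deriv (w l) e * (e - y)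
  neighbour : ∀ {l e y l'}, Interface I a b l e y l' → w l' e ≤ θ
  outer : ∀ {l e y}, OuterEnd I a b l e y → 2 * Real.exp (κ * |y - e|) ≤ w l e

theorem exists_abs_eq_and_mul_eq_mul_abs (hκ : 0 ≤ κ) (r : ℝ) : ∃ η, |η| = κ ∧ η * r = κ * |r| := by
  rcases abs_choice r with h | h
  · exact ⟨κ, abs_of_nonneg hκ, by rw [h]⟩
  · exact ⟨-κ, by rw [abs_neg, abs_of_nonneg hκ], by rw [h, neg_mul, mul_neg]⟩

theorem Transmits.abs_le (hI : OverlappingIntervals I a b) (hw : BarrierFamily K T κ θ I a b w)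
    (hV : Transmits T D I a b V V') (hm : 0 < m) (hV' : DominatedBy T D I a b V' m w)
    {l l' : ℕ} {e y : ℝ} (h : Interface I a b l e y l') {x : Fin (n + 1) → ℝ} (hx : x ∈ face D e)
    {t : ℝ} (ht : t ∈ Ioo 0 T) : |V l (x, t)| ≤ θ * m := by
  have hl' := h.mem_Icc.2
  have hxl' : x ∈ closure (cylinder D (a l') (b l')) :=
    face_subset_closure_cylinder (hI.lt hl') (hI.mem_Icc_of_interface h) hx
  calc |V l (x, t)| = |V' l' (x, t)| := by rw [hV h x hx t ht]
    _ ≤ m * w l' (x (Fin.last n)) := hV' l' hl' x hxl' t (Ioo_subset_Icc_self ht)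
    _ ≤ m * θ := by rw [hx.2]; gcongr; exact hw.neighbour h
    _ = θ * m := mul_comm _ _

namespace BarrierFamily

theorem abs_lastDeriv_le_of_outerEnd (hT : 0 < T) (hK : K.IsDegenerateParabolicOn (Ioo 0 T))
    (hDo : IsOpen D) (hDb : Bornology.IsBounded D) (hκ : 0 < κ)
    (hdrift : ∀ t ∈ Ioo 0 T, |K.drift (Fin.last n) t| < κ * K.diffusion (Fin.last n) (Fin.last n) t)
    (hI : OverlappingIntervals I a b) (hw : BarrierFamily K T κ θ I a b w)
    (hF : ErrorFamily K T D I a b F V) (hm : 0 < m) {l : ℕ} {e y : ℝ} (h : OuterEnd I a b l e y)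
    (hV : ∀ x ∈ face D y, ∀ t ∈ Ioo 0 T, |V l (x, t)| ≤ m) {x : Fin (n + 1) → ℝ}
    (hx : x ∈ face D e) {t : ℝ} (ht : t ∈ Ioo 0 T) : |V l (x, t)| ≤ m * w l e := by
  have hl := hI.mem_Icc_of_outerEnd h
  have hye : 0 < |y - e| := abs_sub_pos_of_pair_eq (hI.lt hl) h.pair_eq
  obtain ⟨η, hη, hηye⟩ := exists_abs_eq_and_mul_eq_mul_abs hκ.le (y - e)
  refine ((hF.solution l hl).abs_lastDeriv_le_of_dirichlet hT hK hDo hDb (hI.lt hl) h.pair_eq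
    (hηye ▸ mul_pos hκ hye) (hη ▸ hdrift) hm (hF.outer h) hV hx ht).trans ?_
  rw [hηye]
  exact mul_le_mul_of_nonneg_left (hw.outer h) hm.le

theorem dominatedBy_lastDeriv (hT : 0 < T) (hK : K.IsDegenerateParabolicOn (Ioo 0 T))
    (hDo : IsOpen D) (hDb : Bornology.IsBounded D) (hκ : 0 < κ)
    (hdrift : ∀ t ∈ Ioo 0 T, |K.drift (Fin.last n) t| < κ * K.diffusion (Fin.last n) (Fin.last n) t)
    (hI : OverlappingIntervals I a b) (hw : BarrierFamily K T κ θ I a b w) (hθ : 0 < θ)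
    (hF : ErrorFamily K T D I a b F V) (hV : Transmits T D I a b V V') (hm : 0 < m)
    (hV' : DominatedBy T D I a b V' m w) : DominatedBy T D I a b V (θ * m) w := by
  intro l hl x hx t ht
  refine ((hF.solution l hl).lastDeriv hT hDo (hI.lt hl)).abs_le_barrier hT hK hDo hDb (hI.lt hl)
    ((hw.barrier l hl).const_mul (mul_pos hθ hm)) (fun e he x hx t ht => Or.inl ?_) hx ht
  obtain ⟨y, ⟨l', h⟩ | h⟩ := hI.exists_interface_or_outerEnd hl he
  · simpa [hw.eq_one h] using hV.abs_le hI hw hm hV' h hx ht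
  · obtain ⟨l', h'⟩ := hI.exists_interface_of_outerEnd h
    exact hw.abs_lastDeriv_le_of_outerEnd hT hK hDo hDb hκ hdrift hI hF (mul_pos hθ hm) h
      (fun x hx t ht => hV.abs_le hI hw hm hV' h' hx ht) hx ht

theorem dominatedBy (hT : 0 < T) (hK : K.IsDegenerateParabolicOn (Ioo 0 T)) (hDo : IsOpen D)
    (hDb : Bornology.IsBounded D) (hI : OverlappingIntervals I a b)
    (hw : BarrierFamily K T κ θ I a b w) (hF : ErrorFamily K T D I a b F V) (hm : 0 < m)
    (hV : DominatedBy T D I a b V m w) : DominatedBy T D I a b F m w := by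
  intro l hl x hx t ht
  refine (hF.solution l hl).abs_le_barrier hT hK hDo hDb (hI.lt hl)
    ((hw.barrier l hl).const_mul hm) (fun e he x hx t ht => ?_) hx ht
  obtain ⟨y, ⟨l', h⟩ | h⟩ := hI.exists_interface_or_outerEnd hl he
  · obtain ⟨heI, hyI⟩ := mem_Icc_and_mem_Icc_of_pair_eq (hI.lt hl) h.pair_eq
    refine Or.inr ⟨V l (x, t), (hF.solution l hl).hasLastDeriv.hasDerivWithinAt_face (hI.lt hl) heI
      hx ht, y, hyI, ?_⟩
    have hVm : |V l (x, t)| ≤ m := by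
      simpa [hx.2, hw.eq_one h] using
        hV l hl x (face_subset_closure_cylinder (hI.lt hl) heI hx) t (Ioo_subset_Icc_self ht)
    calc |V l (x, t)| * |y - e| ≤ m * |y - e| := by gcongr
      _ < m * (deriv (w l) e * (e - y)) := by gcongr; exact hw.slope h
      _ = _ := by rw [deriv_const_mul_field, mul_assoc]
  · refine Or.inl ?_
    rw [hF.outer h x hx t ht, abs_zero]
    exact (mul_pos hm (hw.pos l e)).le

end BarrierFamily

end Iteration

section BarrierConstruction

/-- The exponential of a quadratic with zeros `s` and `r`: it equals `1` at `s` and `r` and, for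
`γ > 0`, is smaller than `1` between them and larger than `1` outside. -/
noncomputable def expQuad (γ s r x : ℝ) : ℝ := Real.exp (γ * ((x - s) * (x - r)))

theorem deriv_expQuad (γ s r : ℝ) :
    deriv (expQuad γ s r) = fun x => γ * (2 * x - s - r) * expQuad γ s r x := by
  ext x
  have hquad : HasDerivAt (fun x => γ * ((x - s) * (x - r))) (γ * (1 * (x - r) + (x - s) * 1)) x :=
    (((hasDerivAt_id x).sub_const s).mul ((hasDerivAt_id x).sub_const r)).const_mul γ
  exact (hquad.exp.congr_deriv (by rw [expQuad]; ring)).deriv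

theorem contDiff_expQuad (γ s r : ℝ) : ContDiff ℝ 2 (expQuad γ s r) := by
  unfold expQuad
  fun_prop

theorem deriv_deriv_expQuad (γ s r x : ℝ) : deriv (deriv (expQuad γ s r)) x
    = (γ ^ 2 * (2 * x - s - r) ^ 2 + 2 * γ) * expQuad γ s r x := by
  have hlin : HasDerivAt (fun x => γ * (2 * x - s - r)) (γ * (2 * 1)) x :=
    ((((hasDerivAt_id x).const_mul 2).sub_const s).sub_const r).const_mul γ
  have hexp := ((contDiff_expQuad γ s r).differentiable two_ne_zero x).hasDerivAt
  rw [deriv_expQuad] at hexp ⊢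
  exact ((hlin.mul hexp).congr_deriv (by ring)).deriv

theorem eventually_barrier_expQuad {n : ℕ} (T M γ s r a b : ℝ) :
    ∀ᶠ c₀ in atTop, ∀ K : ParabolicCoeffs (n + 1),
      (∀ t ∈ Ioo 0 T, |K.diffusion (Fin.last n) (Fin.last n) t| ≤ M) →
      (∀ t ∈ Ioo 0 T, |K.drift (Fin.last n) t| ≤ M) → (∀ t ∈ Ioo 0 T, c₀ ≤ K.potential t) →
      Barrier K T a b (expQuad γ s r) := by
  obtain ⟨R₁, hR₁⟩ := isCompact_Icc.exists_bound_of_continuousOn (s := Icc a b)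
    (f := fun x => γ * (2 * x - s - r)) (by fun_prop)
  obtain ⟨R₂, hR₂⟩ := isCompact_Icc.exists_bound_of_continuousOn (s := Icc a b)
    (f := fun x => γ ^ 2 * (2 * x - s - r) ^ 2 + 2 * γ) (by fun_prop)
  filter_upwards [eventually_gt_atTop (M * R₂ + M * R₁)] with c₀ hc₀ K hA hB hC
  refine ⟨contDiff_expQuad γ s r, fun _ _ => (Real.exp_pos _).le, fun t ht x hx => ?_⟩
  have hmul {u v R : ℝ} (hu : |u| ≤ M) (hv : |v| ≤ R) : |u * v| ≤ M * R := by
    rw [abs_mul]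
    exact mul_le_mul hu hv (abs_nonneg v) ((abs_nonneg u).trans hu)
  have hdiffusion := (abs_le.1 (hmul (hA t ht) (hR₂ x (Ioo_subset_Icc_self hx)))).2
  have hdrift := (abs_le.1 (hmul (hB t ht) (hR₁ x (Ioo_subset_Icc_self hx)))).1
  have hpos : 0 < -(K.diffusion (Fin.last n) (Fin.last n) t
      * (γ ^ 2 * (2 * x - s - r) ^ 2 + 2 * γ))
      + K.drift (Fin.last n) t * (γ * (2 * x - s - r)) + K.potential t := by
    linarith [hC t ht]
  rw [deriv_deriv_expQuad, deriv_expQuad]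
  have := mul_pos hpos (Real.exp_pos (γ * ((x - s) * (x - r))))
  rw [← expQuad] at this
  linarith

variable {I : ℕ} {a b : ℕ → ℝ}

theorem OverlappingIntervals.exists_leftAnchor (hI : OverlappingIntervals I a b) :
    ∃ s : ℕ → ℝ, (∀ l, 1 ≤ l → l + 1 ≤ I → s (l + 1) = a (l + 1) ∧ s l < a (l + 1)) ∧
      a 1 < s 1 := by
  obtain ⟨s₁, hs₁⟩ := exists_between (hI.overlap 1 le_rfl hI.two_le).1
  refine ⟨Function.update a 1 s₁, fun l h₁ h₂ => ⟨Function.update_of_ne (by omega) _ _, ?_⟩,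
    by simpa using hs₁.1⟩
  rcases eq_or_ne l 1 with rfl | h
  · simpa using hs₁.2
  · simpa [h] using (hI.overlap l h₁ h₂).1

theorem OverlappingIntervals.exists_rightAnchor (hI : OverlappingIntervals I a b) :
    ∃ r : ℕ → ℝ, (∀ l, 1 ≤ l → l + 1 ≤ I → r l = b l ∧ b l < r (l + 1)) ∧ r I < b I := by
  obtain ⟨i, rfl⟩ : ∃ i, I = i + 1 := ⟨I - 1, by have := hI.two_le; omega⟩
  have hi : 1 ≤ i := by have := hI.two_le; omega
  obtain ⟨r₁, hr₁⟩ := exists_between (hI.overlap i hi le_rfl).2.2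
  refine ⟨Function.update b (i + 1) r₁, fun l h₁ h₂ => ⟨Function.update_of_ne (by omega) _ _, ?_⟩,
    by simpa using hr₁.2⟩
  rcases eq_or_ne l i with rfl | h
  · simpa using hr₁.1
  · simpa [h] using (hI.overlap l h₁ h₂).2.2

-- Take `s l = a l` and `r l = b l`, except that `s 1` and `r I` are moved inside, towards the
-- nearest interface, so that the quadratic is positive at the outer ends.
theorem OverlappingIntervals.exists_anchors (hI : OverlappingIntervals I a b) :
    ∃ s r : ℕ → ℝ,
      (∀ {l e y l'}, Interface I a b l e y l' → (e - s l) * (e - r l) = 0 ∧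
        0 < (2 * e - s l - r l) * (e - y) ∧ (e - s l') * (e - r l') < 0) ∧
      ∀ {l e y}, OuterEnd I a b l e y → 0 < (e - s l) * (e - r l) := by
  obtain ⟨s, hs, hs₁⟩ := hI.exists_leftAnchor
  obtain ⟨r, hr, hrI⟩ := hI.exists_rightAnchor
  refine ⟨s, r, fun {l e y l'} h => ?_, fun {l e y} h => ?_⟩
  · have hlt := hI.lt h.mem_Icc.1
    cases h with
    | left h₁ h₂ =>
      have hoverlap := hI.overlap l' h₁ h₂
      obtain ⟨hs_eq, hs_lt⟩ := hs l' h₁ h₂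
      obtain ⟨hr_eq, hr_lt⟩ := hr l' h₁ h₂
      rw [hs_eq, hr_eq]
      exact ⟨by ring, mul_pos_of_neg_of_neg (by linarith) (by linarith),
        mul_neg_of_pos_of_neg (by linarith) (by linarith)⟩
    | right h₁ h₂ =>
      have hoverlap := hI.overlap l h₁ h₂
      obtain ⟨hs_eq, hs_lt⟩ := hs l h₁ h₂
      obtain ⟨hr_eq, hr_lt⟩ := hr l h₁ h₂
      rw [hs_eq, hr_eq]
      exact ⟨by ring, mul_pos (by linarith) (by linarith),
        mul_neg_of_pos_of_neg (by linarith) (by linarith)⟩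
  · obtain ⟨i, rfl⟩ : ∃ i, I = i + 1 := ⟨I - 1, by have := hI.two_le; omega⟩
    cases h with
    | first =>
      have hlt := hI.lt (hI.mem_Icc_of_outerEnd .first)
      rw [(hr 1 le_rfl hI.two_le).1]
      exact mul_pos_of_neg_of_neg (by linarith) (by linarith)
    | last =>
      have hlt := hI.lt (hI.mem_Icc_of_outerEnd .last)
      rw [(hs i (by have := hI.two_le; omega) le_rfl).1]
      exact mul_pos (by linarith) (by linarith)

theorem eventually_le_exp_mul {y : ℝ} (hy : 0 < y) (R : ℝ) : ∀ᶠ γ in atTop, R ≤ Real.exp (γ * y) :=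
  (Real.tendsto_exp_atTop.comp (tendsto_id.atTop_mul_const hy)).eventually_ge_atTop R

theorem OverlappingIntervals.exists_barrierFamily (hI : OverlappingIntervals I a b) {n : ℕ}
    (T M κ : ℝ) : ∃ c₀ θ w, 0 ≤ c₀ ∧ θ ∈ Ioo 0 1 ∧ ∀ K : ParabolicCoeffs (n + 1),
      (∀ t ∈ Ioo 0 T, |K.diffusion (Fin.last n) (Fin.last n) t| ≤ M) →
      (∀ t ∈ Ioo 0 T, |K.drift (Fin.last n) t| ≤ M) → (∀ t ∈ Ioo 0 T, c₀ ≤ K.potential t) →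
      BarrierFamily K T κ θ I a b w := by
  obtain ⟨s, r, hinterface, houter⟩ := hI.exists_anchors
  have hslope : ∀ᶠ γ in atTop, ∀ {l e y l'}, Interface I a b l e y l' →
      |y - e| < γ * ((2 * e - s l - r l) * (e - y)) :=
    Interface.eventually_forall fun h =>
      (tendsto_id.atTop_mul_const (hinterface h).2.1).eventually_gt_atTop _
  have hlarge : ∀ᶠ γ in atTop, ∀ {l e y}, OuterEnd I a b l e y →
      2 * Real.exp (κ * |y - e|) ≤ expQuad γ (s l) (r l) e :=
    OuterEnd.eventually_forall fun h => eventually_le_exp_mul (houter h) _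
  obtain ⟨γ, hγ, hγslope, hγlarge⟩ :=
    ((eventually_gt_atTop (0 : ℝ)).and (hslope.and hlarge)).exists
  have hsmall : ∀ᶠ θ in 𝓝[<] (1 : ℝ), ∀ {l e y l'}, Interface I a b l e y l' →
      expQuad γ (s l') (r l') e ≤ θ := Interface.eventually_forall fun {l e y l'} h => by
    have hlt : expQuad γ (s l') (r l') e < 1 :=
      Real.exp_lt_one_iff.2 (mul_neg_of_pos_of_neg hγ (hinterface h).2.2)
    filter_upwards [Ico_mem_nhdsLT hlt] with θ hθ using hθ.1
  obtain ⟨θ, hθ, hθ01⟩ := (hsmall.and (Ioo_mem_nhdsLT one_pos)).exists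
  have hbarrier : ∀ᶠ c₀ in atTop, ∀ l ∈ Finset.Icc 1 I, ∀ K : ParabolicCoeffs (n + 1), _ :=
    (eventually_all_finset _).2 fun l _ =>
      eventually_barrier_expQuad (n := n) T M γ (s l) (r l) (a l) (b l)
  obtain ⟨c₀, hc₀, hc₀_nonneg⟩ := (hbarrier.and (eventually_ge_atTop 0)).exists
  refine ⟨c₀, θ, fun l => expQuad γ (s l) (r l), hc₀_nonneg, hθ01, fun K hA hB hC => ?_⟩
  have heq_one {l e y l'} (h : Interface I a b l e y l') : expQuad γ (s l) (r l) e = 1 := by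
    rw [expQuad, (hinterface h).1, mul_zero, Real.exp_zero]
  refine ⟨fun l hl => hc₀ l (Finset.mem_Icc.2 hl) K hA hB hC, fun _ _ => Real.exp_pos _, heq_one,
    fun h => ?_, hθ, hγlarge⟩
  simpa only [deriv_expQuad, heq_one h, mul_one, mul_assoc] using hγslope h

end BarrierConstruction

section WeightedError

variable {n : ℕ} {K : ParabolicCoeffs (n + 1)} {T κ p Λ ν M : ℝ} {D : Set (Fin n → ℝ)}
  {a b a' b' : ℝ} {f g u v F V : SpaceTime (n + 1) → ℝ}

/-- The exponent `p xₙ − Λ t` of the weight that turns the Robin conditions into Dirichlet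
conditions for the last derivative and makes the potential large. -/
noncomputable def phase (n : ℕ) (p Λ : ℝ) : SpaceTime (n + 1) →L[ℝ] ℝ :=
  p • (ContinuousLinearMap.proj (R := ℝ) (φ := fun _ : Fin (n + 1) => ℝ) (Fin.last n)).comp
    (ContinuousLinearMap.fst ℝ (Fin (n + 1) → ℝ) ℝ) - Λ • ContinuousLinearMap.snd ℝ _ ℝ

theorem phase_apply (q : SpaceTime (n + 1)) :
    phase n p Λ q = p * q.1 (Fin.last n) - Λ * q.2 := rfl

theorem phase_spaceDir (i : Fin (n + 1)) :
    phase n p Λ (spaceDir i) = if i = Fin.last n then p else 0 := by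
  simp [phase_apply, spaceDir, Pi.single_apply, eq_comm]

theorem drift_conj_phase (t : ℝ) : (K.conj (phase n p Λ)).drift (Fin.last n) t
    = K.drift (Fin.last n) t + 2 * p * K.diffusion (Fin.last n) (Fin.last n) t := by
  simp only [ParabolicCoeffs.conj, phase_spaceDir, mul_ite, mul_zero, Finset.sum_ite_eq',
    Finset.mem_univ, ↓reduceIte]
  ring

theorem potential_conj_phase (t : ℝ) : (K.conj (phase n p Λ)).potential t
    = K.potential t + Λ - p * K.drift (Fin.last n) t
      - p ^ 2 * K.diffusion (Fin.last n) (Fin.last n) t := by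
  have htime : phase n p Λ (0, 1) = -Λ := by simp [phase_apply]
  simp only [ParabolicCoeffs.conj, phase_spaceDir, mul_ite, mul_zero, Finset.sum_ite_eq',
    Finset.mem_univ, ↓reduceIte, htime, sub_neg_eq_add, ite_mul, zero_mul]
  ring

/-- Parabolicity at the times in `J` which is uniform, with bounded coefficients, in the last
direction only. -/
structure ParabolicCoeffs.IsUniformlyParabolicInLast (K : ParabolicCoeffs (n + 1)) (J : Set ℝ)
    (ν M : ℝ) : Prop where
  posSemidef : ∀ t ∈ J, (Matrix.of fun i j => K.diffusion i j t).PosSemidef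
  le_diffusion : ∀ t ∈ J, ν ≤ K.diffusion (Fin.last n) (Fin.last n) t
  diffusion_le : ∀ t ∈ J, K.diffusion (Fin.last n) (Fin.last n) t ≤ M
  abs_drift_le : ∀ t ∈ J, |K.drift (Fin.last n) t| ≤ M
  neg_le_potential : ∀ t ∈ J, -M ≤ K.potential t

theorem ParabolicCoeffs.exists_isUniformlyParabolicInLast {J : Set ℝ} (hν : 0 ≤ ν)
    (hsymm : ∀ i j t, K.diffusion i j t = K.diffusion j i t)
    (hell : ∀ t ∈ J, ∀ ξ : Fin (n + 1) → ℝ,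
      ν * ∑ i, ξ i ^ 2 ≤ ∑ i, ∑ j, K.diffusion i j t * ξ i * ξ j)
    (hdiffusion : ∃ C, ∀ t, |K.diffusion (Fin.last n) (Fin.last n) t| ≤ C)
    (hdrift : ∃ C, ∀ t, |K.drift (Fin.last n) t| ≤ C) (hpotential : ∃ C, ∀ t, |K.potential t| ≤ C) :
    ∃ M, K.IsUniformlyParabolicInLast J ν M := by
  obtain ⟨A, hA⟩ := hdiffusion
  obtain ⟨B, hB⟩ := hdrift
  obtain ⟨C, hC⟩ := hpotential
  refine ⟨max A (max B C), fun t ht => ?_, fun t ht => ?_,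
    fun t _ => (le_abs_self _).trans ((hA t).trans (le_max_left _ _)),
    fun t _ => (hB t).trans ((le_max_left _ _).trans (le_max_right _ _)),
    fun t _ => neg_le_of_abs_le ((hC t).trans ((le_max_right _ _).trans (le_max_right _ _)))⟩
  · refine .of_dotProduct_mulVec_nonneg (Matrix.IsHermitian.ext fun i j => hsymm j i t) fun ξ => ?_
    calc 0 ≤ ν * ∑ i, ξ i ^ 2 := by positivity
      _ ≤ ∑ i, ∑ j, K.diffusion i j t * ξ i * ξ j := hell t ht ξ
      _ = _ := by
        simp only [dotProduct, Matrix.mulVec, Matrix.of_apply, star_trivial, Finset.mul_sum]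
        exact Finset.sum_congr rfl fun i _ => Finset.sum_congr rfl fun j _ => by ring
  · simpa [Pi.single_apply] using hell t ht (Pi.single (Fin.last n) 1)

namespace ParabolicCoeffs.IsUniformlyParabolicInLast

variable {J : Set ℝ} {t : ℝ}

theorem abs_drift_conj_phase_le (hK : K.IsUniformlyParabolicInLast J ν M) (hν : 0 < ν)
    (ht : t ∈ J) : |(K.conj (phase n p Λ)).drift (Fin.last n) t| ≤ M + 2 * |p| * M := by
  rw [drift_conj_phase]
  refine (abs_add_le _ _).trans (add_le_add (hK.abs_drift_le t ht) ?_)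
  rw [abs_mul, abs_mul, abs_two, abs_of_nonneg (hν.le.trans (hK.le_diffusion t ht))]
  gcongr
  exact hK.diffusion_le t ht

theorem le_potential_conj_phase (hK : K.IsUniformlyParabolicInLast J ν M) (ht : t ∈ J) :
    Λ - (M + |p| * M + p ^ 2 * M) ≤ (K.conj (phase n p Λ)).potential t := by
  have hdrift : p * K.drift (Fin.last n) t ≤ |p| * M := by
    refine (le_abs_self _).trans ?_
    rw [abs_mul]
    gcongr
    exact hK.abs_drift_le t ht
  have hdiffusion := mul_le_mul_of_nonneg_left (hK.diffusion_le t ht) (sq_nonneg p)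
  rw [potential_conj_phase]
  linarith [hK.neg_le_potential t ht]

theorem exists_barrierFamily (hK : K.IsUniformlyParabolicInLast (Ioo 0 T) ν M) (hν : 0 < ν)
    {I : ℕ} {a b : ℕ → ℝ} (hI : OverlappingIntervals I a b) (p : ℝ) :
    ∃ Λ κ θ w, 0 < κ ∧ θ ∈ Ioo 0 1 ∧
      (K.conj (phase n p Λ)).IsDegenerateParabolicOn (Ioo 0 T) ∧
      (∀ t ∈ Ioo 0 T, |(K.conj (phase n p Λ)).drift (Fin.last n) t|
        < κ * (K.conj (phase n p Λ)).diffusion (Fin.last n) (Fin.last n) t) ∧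
      BarrierFamily (K.conj (phase n p Λ)) T κ θ I a b w := by
  set N := M + 2 * |p| * M
  set κ := (|N| + 1) / ν with hκ
  obtain ⟨c₀, θ, w, hc₀, hθ, hw⟩ := hI.exists_barrierFamily (n := n) T (|N| + |M|) κ
  set Λ := c₀ + (M + |p| * M + p ^ 2 * M)
  have hpotential (t) (ht : t ∈ Ioo 0 T) : c₀ ≤ (K.conj (phase n p Λ)).potential t := by
    simpa [Λ] using hK.le_potential_conj_phase (p := p) (Λ := Λ) ht
  refine ⟨Λ, κ, θ, w, by positivity, hθ,
    ⟨hK.posSemidef, fun t ht => hc₀.trans (hpotential t ht)⟩, fun t ht => ?_,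
    hw _ (fun t ht => ?_) (fun t ht => ?_) hpotential⟩
  · calc _ ≤ N := hK.abs_drift_conj_phase_le hν ht
      _ < κ * ν := by rw [hκ, div_mul_cancel₀ _ hν.ne']; linarith [le_abs_self N]
      _ ≤ _ := by gcongr; exact hK.le_diffusion t ht
  · have hdiffusion : |K.diffusion (Fin.last n) (Fin.last n) t| ≤ |M| := by
      rw [abs_of_nonneg (hν.le.trans (hK.le_diffusion t ht))]
      exact (hK.diffusion_le t ht).trans (le_abs_self M)
    exact hdiffusion.trans (le_add_of_nonneg_left (abs_nonneg _))
  · exact (hK.abs_drift_conj_phase_le hν ht).trans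
      ((le_abs_self _).trans (le_add_of_nonneg_right (abs_nonneg M)))

end ParabolicCoeffs.IsUniformlyParabolicInLast

theorem HomogeneousSolutionWithDeriv.exp_mul (h : HomogeneousSolutionWithDeriv K T D a b F V)
    (L : SpaceTime (n + 1) →L[ℝ] ℝ) :
    HomogeneousSolutionWithDeriv (K.conj L) T D a b (fun q => Real.exp (L q) * F q)
      (fun q => Real.exp (L q) * (V q + L (spaceDir (Fin.last n)) * F q)) where
  continuousOn := L.continuous.rexp.continuousOn.mul h.continuousOn
  contDiffAt q hq := L.contDiff.exp.contDiffAt.mul (h.contDiffAt q hq)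
  op_eq_zero q hq := by rw [K.op_conj_exp_mul (h.contDiffAt q hq), h.op_eq_zero q hq, mul_zero]
  initial x hx := by rw [h.initial x hx, mul_zero]
  lateral x hx hxD t ht := by rw [h.lateral x hx hxD t ht, mul_zero]
  contDiffAt_three q hq := L.contDiff.exp.contDiffAt.mul (h.contDiffAt_three q hq)
  hasLastDeriv := h.hasLastDeriv.exp_mul L
  continuousOn_lastDeriv := L.continuous.rexp.continuousOn.mul
    (h.continuousOn_lastDeriv.add (continuousOn_const.mul h.continuousOn))

/-- A solution of `𝒫u = f` on `S × (0, T)`, of class `C³` up to the boundary, with initial values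
given by `g`. -/
structure IsInitialValueSolution (K : ParabolicCoeffs (n + 1)) (T : ℝ) (S : Set (Fin (n + 1) → ℝ))
    (f g u : SpaceTime (n + 1) → ℝ) : Prop where
  contDiffOn : ContDiffOn ℝ 3 u (closure S ×ˢ Icc 0 T)
  equation : ∀ x ∈ S, ∀ t ∈ Ioo 0 T,
    parabolicOp K.diffusion K.drift K.potential (fun y s => u (y, s)) x t = f (x, t)
  initial : ∀ x ∈ S, u (x, 0) = g (x, 0)

namespace IsInitialValueSolution

variable {S S' : Set (Fin (n + 1) → ℝ)}

theorem contDiffAt (hS : IsOpen S) (hu : IsInitialValueSolution K T S f g u)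
    {q : SpaceTime (n + 1)} (hq : q ∈ S ×ˢ Ioo 0 T) : ContDiffAt ℝ 3 u q :=
  (hu.contDiffOn.mono (prod_mono subset_closure Ioo_subset_Icc_self)).contDiffAt
    ((hS.prod isOpen_Ioo).mem_nhds hq)

theorem op_eq (hS : IsOpen S) (hu : IsInitialValueSolution K T S f g u)
    {q : SpaceTime (n + 1)} (hq : q ∈ S ×ˢ Ioo 0 T) : K.op u q = f q := by
  rw [← hu.equation q.1 hq.1 q.2 hq.2]
  exact (parabolicOp_eq_op ((hu.contDiffAt hS hq).of_le (by norm_num))).symm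

theorem initial_closure (hT : 0 < T) (hv : IsInitialValueSolution K T S f g v)
    (hu : IsInitialValueSolution K T S f g u) {x : Fin (n + 1) → ℝ} (hx : x ∈ closure S) :
    v (x, 0) = u (x, 0) := by
  have hinit : MapsTo (fun x : Fin (n + 1) → ℝ => (x, (0 : ℝ))) (closure S)
      (closure S ×ˢ Icc 0 T) := fun y hy => ⟨hy, le_rfl, hT.le⟩
  have heq : EqOn (fun x => v (x, 0)) (fun x => u (x, 0)) S := fun y hy =>
    (hv.initial y hy).trans (hu.initial y hy).symm
  exact heq.of_subset_closure (hv.contDiffOn.continuousOn.comp (by fun_prop) hinit)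
    (hu.contDiffOn.continuousOn.comp (by fun_prop) hinit) subset_closure subset_rfl hx

theorem mono (hu : IsInitialValueSolution K T S f g u) (hS : S' ⊆ S) :
    IsInitialValueSolution K T S' f g u :=
  ⟨hu.contDiffOn.mono (prod_mono (closure_mono hS) subset_rfl), fun x hx => hu.equation x (hS hx),
    fun x hx => hu.initial x (hS hx)⟩

end IsInitialValueSolution

theorem cylinder_subset_cylinder (ha : a' ≤ a) (hb : b ≤ b') :
    cylinder D a b ⊆ cylinder D a' b' :=
  fun _ hx => ⟨hx.1, Ioo_subset_Ioo ha hb hx.2⟩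

theorem IsInitialValueSolution.sub (hT : 0 < T) (hDo : IsOpen D) (hab : a < b)
    (ha : a' ≤ a) (hb : b ≤ b') (hv : IsInitialValueSolution K T (cylinder D a b) f g v)
    (hu : IsInitialValueSolution K T (cylinder D a' b') f g u)
    (hlateral : ∀ x ∈ closure (cylinder D a b), Fin.init x ∉ D → ∀ t ∈ Ioo 0 T,
      v (x, t) = u (x, t)) :
    HomogeneousSolutionWithDeriv K T D a b (fun q => v q - u q)
      (fun q => lastDerivWithin (closure (cylinder D a b)) v q
        - lastDerivWithin (closure (cylinder D a' b')) u q) := by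
  have hsub : cylinder D a b ⊆ cylinder D a' b' := cylinder_subset_cylinder ha hb
  have hopen := isOpen_cylinder hDo a b
  have hu' := hu.mono hsub
  have hab' : a' < b' := ha.trans_lt (hab.trans_le hb)
  have hthree (q) (hq : q ∈ cylinder D a b ×ˢ Ioo 0 T) : ContDiffAt ℝ 3 (fun q => v q - u q) q :=
    (hv.contDiffAt hopen hq).sub (hu'.contDiffAt hopen hq)
  refine ⟨⟨hv.contDiffOn.continuousOn.sub hu'.contDiffOn.continuousOn,
    fun q hq => (hthree q hq).of_le (by norm_num), fun q hq => ?_,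
    fun x hx => sub_eq_zero.2 (hv.initial_closure hT hu' hx),
    fun x hx hxD t ht => sub_eq_zero.2 (hlateral x hx hxD t ht)⟩, hthree, ?_, ?_⟩
  · rw [K.op_sub ((hv.contDiffAt hopen hq).of_le (by norm_num))
      ((hu'.contDiffAt hopen hq).of_le (by norm_num)), hv.op_eq hopen hq, hu'.op_eq hopen hq,
      sub_self]
  · exact (hasLastDeriv_lastDerivWithin hab (hv.contDiffOn.differentiableOn three_ne_zero)).sub
      ((hasLastDeriv_lastDerivWithin hab' (hu.contDiffOn.differentiableOn three_ne_zero)).mono hsub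
        (Icc_subset_Icc ha hb))
  · exact (continuousOn_lastDerivWithin hab (hv.contDiffOn.of_le (by norm_num))).sub
      ((continuousOn_lastDerivWithin hab' (hu.contDiffOn.of_le (by norm_num))).mono
        (prod_mono (closure_mono hsub) subset_rfl))

end WeightedError

section Schwarz

variable {n : ℕ} {K : ParabolicCoeffs (n + 1)} {T κ θ p Λ ν M : ℝ} {D : Set (Fin n → ℝ)} {I : ℕ}
  {a b : ℕ → ℝ} {w : ℕ → ℝ → ℝ} {f g u : SpaceTime (n + 1) → ℝ}

theorem exists_dominatedBy (hDb : Bornology.IsBounded D) (hw : ∀ l ∈ Icc 1 I, Continuous (w l))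
    (hpos : ∀ l s, 0 < w l s) {V : ℕ → SpaceTime (n + 1) → ℝ}
    (hV : ∀ l ∈ Icc 1 I, ContinuousOn (V l) (closure (cylinder D (a l) (b l)) ×ˢ Icc 0 T)) :
    ∃ m > 0, DominatedBy T D I a b V m w := by
  have hlarge : ∀ᶠ m in atTop, ∀ l ∈ Finset.Icc 1 I, ∀ x ∈ closure (cylinder D (a l) (b l)),
      ∀ t ∈ Icc 0 T, |V l (x, t)| ≤ m * w l (x (Fin.last n)) := by
    refine (eventually_all_finset _).2 fun l hl => ?_
    rw [Finset.mem_Icc] at hl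
    have hquot : ContinuousOn (fun q => V l q / w l (q.1 (Fin.last n)))
        (closure (cylinder D (a l) (b l)) ×ˢ Icc 0 T) :=
      (hV l hl).div ((hw l hl).comp (by fun_prop)).continuousOn fun q _ => (hpos l _).ne'
    obtain ⟨R, hR⟩ := ((isBounded_cylinder hDb (a l) (b l)).isCompact_closure.prod
      isCompact_Icc).exists_bound_of_continuousOn hquot
    filter_upwards [eventually_ge_atTop R] with m hm x hx t ht
    have h := (hR (x, t) ⟨hx, ht⟩).trans hm
    rwa [Real.norm_eq_abs, abs_div, abs_of_pos (hpos l _), div_le_iff₀ (hpos l _)] at h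
  obtain ⟨m, hm, hm₀⟩ := (hlarge.and (eventually_gt_atTop 0)).exists
  exact ⟨m, hm₀, fun l hl => hm l (Finset.mem_Icc.2 hl)⟩

theorem BarrierFamily.exists_dominatedBy_pow (hT : 0 < T)
    (hK : K.IsDegenerateParabolicOn (Ioo 0 T)) (hDo : IsOpen D) (hDb : Bornology.IsBounded D)
    (hκ : 0 < κ)
    (hdrift : ∀ t ∈ Ioo 0 T, |K.drift (Fin.last n) t| < κ * K.diffusion (Fin.last n) (Fin.last n) t)
    (hI : OverlappingIntervals I a b) (hw : BarrierFamily K T κ θ I a b w) (hθ : 0 < θ)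
    {F V : ℕ → ℕ → SpaceTime (n + 1) → ℝ} (hF : ∀ k, ErrorFamily K T D I a b (F k) (V k))
    (hV : ∀ k, Transmits T D I a b (V (k + 1)) (V k)) :
    ∃ m > 0, ∀ k, DominatedBy T D I a b (V k) (θ ^ k * m) w ∧
      DominatedBy T D I a b (F k) (θ ^ k * m) w := by
  obtain ⟨m, hm, hV₀⟩ := exists_dominatedBy hDb
    (fun l hl => (hw.barrier l hl).contDiff.continuous) hw.pos
    fun l hl => ((hF 0).solution l hl).continuousOn_lastDeriv
  have hdecay (k : ℕ) : DominatedBy T D I a b (V k) (θ ^ k * m) w := by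
    induction k with
    | zero => simpa using hV₀
    | succ k ih =>
      simpa only [pow_succ', mul_assoc] using hw.dominatedBy_lastDeriv hT hK hDo hDb hκ hdrift hI
        hθ (hF (k + 1)) (hV k) (by positivity) ih
  exact ⟨m, hm, fun k =>
    ⟨hdecay k, hw.dominatedBy hT hK hDo hDb hI (hF k) (by positivity) (hdecay k)⟩⟩

/-- The Robin trace `∂ₙF + p F`, the derivative being taken within `S`. -/
noncomputable def robinTrace (p : ℝ) (S : Set (Fin (n + 1) → ℝ)) (F : SpaceTime (n + 1) → ℝ)
    (q : SpaceTime (n + 1)) : ℝ :=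
  lastDerivWithin S F q + p * F q

/-- The iterates `U k l` (`k ≥ 1`, `1 ≤ l ≤ I`) of the overlapping Schwarz waveform relaxation
method on the cylinders `D × (a l, b l)`, with Robin transmission conditions. -/
structure IsSchwarzIteration (K : ParabolicCoeffs (n + 1)) (T p : ℝ) (D : Set (Fin n → ℝ)) (I : ℕ)
    (a b : ℕ → ℝ) (f g : SpaceTime (n + 1) → ℝ) (U : ℕ → ℕ → SpaceTime (n + 1) → ℝ) : Prop where
  solution : ∀ k, 1 ≤ k → ∀ l ∈ Icc 1 I,
    IsInitialValueSolution K T (cylinder D (a l) (b l)) f g (U k l)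
  robin_left : ∀ k, 2 ≤ k → ∀ l, 2 ≤ l → l ≤ I → ∀ X ∈ D, ∀ t ∈ Ioo 0 T,
    robinTrace p (closure (cylinder D (a l) (b l))) (U k l) (Fin.snoc X (a l), t)
      = robinTrace p (closure (cylinder D (a (l - 1)) (b (l - 1)))) (U (k - 1) (l - 1))
        (Fin.snoc X (a l), t)
  robin_right : ∀ k, 2 ≤ k → ∀ l, 1 ≤ l → l + 1 ≤ I → ∀ X ∈ D, ∀ t ∈ Ioo 0 T,
    robinTrace p (closure (cylinder D (a l) (b l))) (U k l) (Fin.snoc X (b l), t)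
      = robinTrace p (closure (cylinder D (a (l + 1)) (b (l + 1)))) (U (k - 1) (l + 1))
        (Fin.snoc X (b l), t)
  boundary : ∀ k, 1 ≤ k → ∀ l ∈ Icc 1 I,
    ∀ x ∈ frontier (cylinder D (a l) (b l)) ∩ frontier (cylinder D (a 1) (b I)),
      ∀ t ∈ Ioo 0 T, U k l (x, t) = g (x, t)

/-- The error of the iterates `U l`, weighted by `exp (p xₙ − Λ t)`. -/
noncomputable def weightedError (p Λ : ℝ) (U : ℕ → SpaceTime (n + 1) → ℝ)
    (u : SpaceTime (n + 1) → ℝ) (l : ℕ) (q : SpaceTime (n + 1)) : ℝ :=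
  Real.exp (phase n p Λ q) * (U l q - u q)

/-- The error of the Robin traces of the iterates `U l`, weighted by `exp (p xₙ − Λ t)`; it is the
last derivative of `weightedError p Λ U u l`. -/
noncomputable def weightedRobinError (p Λ : ℝ) (D : Set (Fin n → ℝ)) (I : ℕ) (a b : ℕ → ℝ)
    (U : ℕ → SpaceTime (n + 1) → ℝ) (u : SpaceTime (n + 1) → ℝ) (l : ℕ) (q : SpaceTime (n + 1)) :
    ℝ :=
  Real.exp (phase n p Λ q) * (robinTrace p (closure (cylinder D (a l) (b l))) (U l) q
    - robinTrace p (closure (cylinder D (a 1) (b I))) u q)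

theorem OuterEnd.face_subset_frontier (hI : OverlappingIntervals I a b) (hDo : IsOpen D) {l : ℕ}
    {e y : ℝ} (h : OuterEnd I a b l e y) : face (n := n) D e ⊆
      frontier (cylinder D (a l) (b l)) ∩ frontier (cylinder D (a 1) (b I)) := by
  have hlt := hI.lt (hI.mem_Icc_of_outerEnd h)
  have hlt' := hI.first_lt_last
  intro x hx
  simp only [(isOpen_cylinder hDo _ _).frontier_eq]
  cases h with
  | first | last =>
    exact ⟨⟨face_subset_closure_cylinder hlt (by simp [hlt.le]) hx, fun h => by
        simpa [hx.2] using h.2⟩,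
      face_subset_closure_cylinder hlt' (by simp [hlt'.le]) hx, fun h => by
        simpa [hx.2] using h.2⟩

namespace IsSchwarzIteration

variable {U : ℕ → ℕ → SpaceTime (n + 1) → ℝ} {k l : ℕ}

theorem transmits (hU : IsSchwarzIteration K T p D I a b f g U) (hk : 1 ≤ k) :
    Transmits T D I a b (weightedRobinError p Λ D I a b (U (k + 1)) u)
      (weightedRobinError p Λ D I a b (U k) u) := by
  intro l e y l' h x hx t ht
  rw [← Fin.snoc_init_self x, hx.2, weightedRobinError, weightedRobinError]
  congr 2
  cases h with
  | left h₁ h₂ => exact hU.robin_left (k + 1) (by omega) (l' + 1) (by omega) h₂ _ hx.1 t ht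
  | right h₁ h₂ => exact hU.robin_right (k + 1) (by omega) l h₁ h₂ _ hx.1 t ht

theorem homogeneousSolutionWithDeriv_sub (hT : 0 < T) (hDo : IsOpen D)
    (hI : OverlappingIntervals I a b) (hU : IsSchwarzIteration K T p D I a b f g U)
    (hu : IsInitialValueSolution K T (cylinder D (a 1) (b I)) f g u)
    (hbdy : ∀ x ∈ frontier (cylinder D (a 1) (b I)), ∀ t ∈ Ioo 0 T, u (x, t) = g (x, t))
    (hk : 1 ≤ k) (hl : l ∈ Icc 1 I) :
    HomogeneousSolutionWithDeriv K T D (a l) (b l) (fun q => U k l q - u q)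
      (fun q => lastDerivWithin (closure (cylinder D (a l) (b l))) (U k l) q
        - lastDerivWithin (closure (cylinder D (a 1) (b I))) u q) := by
  have hsub : closure (cylinder (n := n) D (a l) (b l)) ⊆ closure (cylinder D (a 1) (b I)) :=
    closure_mono (cylinder_subset_cylinder (hI.first_le hl) (hI.le_last hl))
  refine (hU.solution k hk l hl).sub hT hDo (hI.lt hl) (hI.first_le hl) (hI.le_last hl) hu
    fun x hx hxD t ht => ?_
  have hfrontier (a b : ℝ) (hx : x ∈ closure (cylinder D a b)) : x ∈ frontier (cylinder D a b) :=
    (isOpen_cylinder hDo a b).frontier_eq ▸ ⟨hx, fun h => hxD h.1⟩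
  rw [hU.boundary k hk l hl x ⟨hfrontier _ _ hx, hfrontier _ _ (hsub hx)⟩ t ht,
    hbdy x (hfrontier _ _ (hsub hx)) t ht]

theorem errorFamily (hT : 0 < T) (hDo : IsOpen D) (hI : OverlappingIntervals I a b)
    (hU : IsSchwarzIteration K T p D I a b f g U)
    (hu : IsInitialValueSolution K T (cylinder D (a 1) (b I)) f g u)
    (hbdy : ∀ x ∈ frontier (cylinder D (a 1) (b I)), ∀ t ∈ Ioo 0 T, u (x, t) = g (x, t))
    (hk : 1 ≤ k) :
    ErrorFamily (K.conj (phase n p Λ)) T D I a b (weightedError p Λ (U k) u)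
      (weightedRobinError p Λ D I a b (U k) u) where
  solution l hl := by
    have hderiv : weightedRobinError p Λ D I a b (U k) u l = fun q =>
        Real.exp (phase n p Λ q) * (lastDerivWithin (closure (cylinder D (a l) (b l))) (U k l) q
          - lastDerivWithin (closure (cylinder D (a 1) (b I))) u q
          + phase n p Λ (spaceDir (Fin.last n)) * (U k l q - u q)) := by
      funext q
      simp only [weightedRobinError, robinTrace, phase_spaceDir, ↓reduceIte]
      ring
    rw [hderiv]
    exact (hU.homogeneousSolutionWithDeriv_sub hT hDo hI hu hbdy hk hl).exp_mul _
  outer h x hx t ht := by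
    have hx' := h.face_subset_frontier hI hDo hx
    rw [weightedError, hU.boundary k hk _ (hI.mem_Icc_of_outerEnd h) x hx' t ht, hbdy x hx'.2 t ht,
      sub_self, mul_zero]

theorem exp_mul_lastDerivWithin_sub (hT : 0 < T) (hDo : IsOpen D)
    (hI : OverlappingIntervals I a b) (hU : IsSchwarzIteration K T p D I a b f g U)
    (hu : IsInitialValueSolution K T (cylinder D (a 1) (b I)) f g u)
    (hbdy : ∀ x ∈ frontier (cylinder D (a 1) (b I)), ∀ t ∈ Ioo 0 T, u (x, t) = g (x, t))
    (hk : 1 ≤ k) (hl : l ∈ Icc 1 I) {x : Fin (n + 1) → ℝ}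
    (hx : x ∈ closure (cylinder D (a l) (b l))) {t : ℝ} (ht : t ∈ Icc 0 T) :
    Real.exp (p * x (Fin.last n))
        * lastDerivWithin (closure (cylinder D (a l) (b l))) (fun q => U k l q - u q) (x, t)
      = Real.exp (Λ * t) * (weightedRobinError p Λ D I a b (U k) u l (x, t)
        - p * weightedError p Λ (U k) u l (x, t)) := by
  have hsub : cylinder (n := n) D (a l) (b l) ⊆ cylinder D (a 1) (b I) :=
    cylinder_subset_cylinder (hI.first_le hl) (hI.le_last hl)
  have hdiff : DifferentiableOn ℝ (fun q => U k l q - u q)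
      (closure (cylinder D (a l) (b l)) ×ˢ Icc 0 T) :=
    ((hU.solution k hk l hl).contDiffOn.sub (hu.mono hsub).contDiffOn).differentiableOn
      three_ne_zero
  have hderiv := (hasLastDeriv_lastDerivWithin (hI.lt hl) hdiff).unique (hI.lt hl)
    (hU.homogeneousSolutionWithDeriv_sub hT hDo hI hu hbdy hk hl).hasLastDeriv hx ht
  have hexp : Real.exp (p * x (Fin.last n))
      = Real.exp (Λ * t) * Real.exp (phase n p Λ (x, t)) := by
    rw [← Real.exp_add, phase_apply]
    congr 1
    ring
  rw [hderiv, hexp, weightedRobinError, weightedError, robinTrace, robinTrace]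
  ring

theorem exists_geometric_bound (hT : 0 < T) (hν : 0 < ν)
    (hK : K.IsUniformlyParabolicInLast (Ioo 0 T) ν M) (hDo : IsOpen D)
    (hDb : Bornology.IsBounded D) (hI : OverlappingIntervals I a b)
    (hU : IsSchwarzIteration K T p D I a b f g U)
    (hu : IsInitialValueSolution K T (cylinder D (a 1) (b I)) f g u)
    (hbdy : ∀ x ∈ frontier (cylinder D (a 1) (b I)), ∀ t ∈ Ioo 0 T, u (x, t) = g (x, t)) :
    ∃ C, ∃ θ ∈ Ioo (0 : ℝ) 1, ∀ k, ∀ l ∈ Icc 1 I, ∀ x ∈ closure (cylinder D (a l) (b l)),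
      ∀ t ∈ Icc 0 T, |Real.exp (p * x (Fin.last n)) * lastDerivWithin
        (closure (cylinder D (a l) (b l))) (fun q => U (k + 1) l q - u q) (x, t)| ≤ C * θ ^ k := by
  obtain ⟨Λ, κ, θ, w, hκ, hθ, hconj, hdrift, hw⟩ := hK.exists_barrierFamily hν hI p
  obtain ⟨m, hm, hdecay⟩ := hw.exists_dominatedBy_pow hT hconj hDo hDb hκ hdrift hI hθ.1
    (fun k => hU.errorFamily hT hDo hI hu hbdy k.succ_pos) fun k => hU.transmits k.succ_pos
  obtain ⟨W, -, hW⟩ := exists_dominatedBy (T := T) (I := I) (a := a) (b := b)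
    (w := fun _ _ => 1) hDb (fun _ _ => continuous_const) (fun _ _ => one_pos)
    (V := fun l q => w l (q.1 (Fin.last n)))
    fun l hl => ((hw.barrier l hl).contDiff.continuous.comp (by fun_prop)).continuousOn
  refine ⟨Real.exp (|Λ| * T) * ((1 + |p|) * (m * W)), θ, hθ, fun k l hl x hx t ht => ?_⟩
  have hθk : 0 ≤ θ ^ k * m := mul_nonneg (pow_nonneg hθ.1.le k) hm.le
  have hprofile : θ ^ k * m * w l (x (Fin.last n)) ≤ θ ^ k * m * W := by
    gcongr
    simpa using (le_abs_self _).trans (hW l hl x hx t ht)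
  have hV := ((hdecay k).1 l hl x hx t ht).trans hprofile
  have hF := ((hdecay k).2 l hl x hx t ht).trans hprofile
  rw [hU.exp_mul_lastDerivWithin_sub (Λ := Λ) hT hDo hI hu hbdy k.succ_pos hl hx ht, abs_mul,
    Real.abs_exp]
  calc _ ≤ Real.exp (|Λ| * T) * (θ ^ k * m * W + |p| * (θ ^ k * m * W)) := by
        gcongr
        · exact ht.1
        · exact le_abs_self Λ
        · exact ht.2
        · refine (abs_sub _ _).trans ?_
          rw [abs_mul]
          gcongr
    _ = _ := by ring

end IsSchwarzIteration

theorem tendsto_sSup_zero_of_abs_le {A : ℕ → Set ℝ} {r : ℕ → ℝ} (hr : ∀ k, 0 ≤ r k)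
    (hA : ∀ k, ∀ y ∈ A k, |y| ≤ r k) (hlim : Tendsto r atTop (𝓝 0)) :
    Tendsto (fun k => sSup (A k)) atTop (𝓝 0) := by
  refine squeeze_zero_norm (fun k => abs_le.2 ⟨?_, Real.sSup_le (fun y hy =>
    (le_abs_self y).trans (hA k y hy)) (hr k)⟩) hlim
  rcases (A k).eq_empty_or_nonempty with h | ⟨y, hy⟩
  · simpa [h] using hr k
  · exact (abs_le.1 (hA k y hy)).1.trans
      (le_csSup ⟨r k, fun z hz => (le_abs_self z).trans (hA k z hz)⟩ hy)

theorem schwarz_method_weighted_uniform_convergence_general (hT : 0 < T) (hν : 0 < ν)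
    (hK : K.IsUniformlyParabolicInLast (Ioo 0 T) ν M) (hDo : IsOpen D)
    (hDb : Bornology.IsBounded D) (hI : OverlappingIntervals I a b)
    {U : ℕ → ℕ → SpaceTime (n + 1) → ℝ} (hU : IsSchwarzIteration K T p D I a b f g U)
    (hu : IsInitialValueSolution K T (cylinder D (a 1) (b I)) f g u)
    (hbdy : ∀ x ∈ frontier (cylinder D (a 1) (b I)), ∀ t ∈ Ioo 0 T, u (x, t) = g (x, t))
    {ϕ : ℝ → ℝ} {R : ℝ} (hϕ : ∀ t ∈ Icc 0 T, |ϕ t| ≤ R) :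
    Tendsto (fun k => sSup {y : ℝ | ∃ l, 1 ≤ l ∧ l ≤ I ∧
      ∃ x ∈ closure (cylinder D (a l) (b l)), ∃ t ∈ Icc 0 T,
        y = lastDerivWithin (closure (cylinder D (a l) (b l))) (fun q => U k l q - u q) (x, t) ^ 2
          * Real.exp (2 * p * x (Fin.last n)) * ϕ t}) atTop (𝓝 0) := by
  obtain ⟨C, θ, hθ, hbound⟩ := hU.exists_geometric_bound hT hν hK hDo hDb hI hu hbdy
  have hR : 0 ≤ R := (abs_nonneg _).trans (hϕ 0 ⟨le_rfl, hT.le⟩)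
  rw [← tendsto_add_atTop_iff_nat 1]
  refine tendsto_sSup_zero_of_abs_le (r := fun k => (C * θ ^ k) ^ 2 * R) (fun k => by positivity)
    (fun k => ?_) ?_
  · rintro y ⟨l, hl₁, hl₂, x, hx, t, ht, rfl⟩
    have hsq : Real.exp (2 * p * x (Fin.last n)) = Real.exp (p * x (Fin.last n)) ^ 2 := by
      rw [← Real.exp_nat_mul, Nat.cast_ofNat, mul_assoc]
    rw [hsq, ← mul_pow, mul_comm (lastDerivWithin _ _ _), abs_mul, abs_pow]
    gcongr
    exacts [hbound k l ⟨hl₁, hl₂⟩ x hx t ht, hϕ t ht]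
  · have hpow := tendsto_pow_atTop_nhds_zero_of_lt_one hθ.1.le hθ.2
    simpa using ((hpow.const_mul C).pow 2).mul_const R

end Schwarz

/-- convergence of the overlapping optimized Schwarz waveform
relaxation method in the weighted uniform norm: there is `Γ > 0` such that for
every strictly positive C¹ weight `ϕ` with `ϕ′ ≤ −Γϕ` on `[0,T]`,
`max_l sup_{cl(Ω_l)×[0,T]} (∂ₙ(u_l^k − u))² e^{2pxₙ} ϕ(t) → 0` as `k → ∞`. -/
theorem schwarz_method_weighted_uniform_convergence
    {n : ℕ} (T p ν₀ : ℝ) (hT : 0 < T) (hν₀ : 0 < ν₀)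
    -- coefficients: symmetric, smooth, bounded, uniformly elliptic on (0,T)
    (a : Fin (n+1) → Fin (n+1) → ℝ → ℝ) (b : Fin (n+1) → ℝ → ℝ) (c : ℝ → ℝ)
    (ha_symm : ∀ i j t, a i j t = a j i t)
    (ha_smooth : ∀ i j, ContDiff ℝ (⊤ : ℕ∞) (a i j))
    (ha_bdd : ∀ i j, ∃ C, ∀ t, |a i j t| ≤ C)
    (hb_smooth : ∀ i, ContDiff ℝ (⊤ : ℕ∞) (b i))
    (hb_bdd : ∀ i, ∃ C, ∀ t, |b i t| ≤ C)
    (hc_smooth : ContDiff ℝ (⊤ : ℕ∞) c)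
    (hc_bdd : ∃ C, ∀ t, |c t| ≤ C)
    (hell : ∀ t ∈ Ioo (0:ℝ) T, ∀ ξ : Fin (n+1) → ℝ,
      ν₀ * ∑ i, ξ i ^ 2 ≤ ∑ i, ∑ j, a i j t * ξ i * ξ j)
    -- geometry: Ω = D × (α,β), overlapping decomposition Ω_l = D × (a_l,b_l)
    (D : Set (Fin n → ℝ)) (hD_open : IsOpen D) (hD_bdd : Bornology.IsBounded D)
    (hD_ne : D.Nonempty)
    (α β : ℝ) (hαβ : α < β)
    (I : ℕ) (hI : 2 ≤ I)
    (aa bb : ℕ → ℝ) (haa1 : aa 1 = α) (hbbI : bb I = β)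
    (horder : ∀ l, 1 ≤ l → l + 1 ≤ I →
      aa l < aa (l + 1) ∧ aa (l + 1) < bb l ∧ bb l < bb (l + 1))
    (Ω : Set (Fin (n+1) → ℝ))
    (hΩ : Ω = {x : Fin (n+1) → ℝ | Fin.init x ∈ D ∧ x (Fin.last n) ∈ Ioo α β})
    (Ωl : ℕ → Set (Fin (n+1) → ℝ))
    (hΩl : ∀ l, Ωl l =
      {x : Fin (n+1) → ℝ | Fin.init x ∈ D ∧ x (Fin.last n) ∈ Ioo (aa l) (bb l)})
    -- data
    (f g : (Fin (n+1) → ℝ) → ℝ → ℝ)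
    (hf_smooth : ContDiffOn ℝ (⊤ : ℕ∞)
      (fun q : (Fin (n+1) → ℝ) × ℝ => f q.1 q.2) (closure Ω ×ˢ Icc 0 T))
    (hf_bdd : ∃ C, ∀ x ∈ closure Ω, ∀ t ∈ Icc (0:ℝ) T, |f x t| ≤ C)
    (hg_smooth : ContDiffOn ℝ (⊤ : ℕ∞)
      (fun q : (Fin (n+1) → ℝ) × ℝ => g q.1 q.2) (closure Ω ×ˢ Icc 0 T))
    (hg_bdd : ∃ C, ∀ x ∈ closure Ω, ∀ t ∈ Icc (0:ℝ) T, |g x t| ≤ C)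
    -- the exact solution u
    (u : (Fin (n+1) → ℝ) → ℝ → ℝ)
    (hu_smooth : ContDiffOn ℝ (⊤ : ℕ∞)
      (fun q : (Fin (n+1) → ℝ) × ℝ => u q.1 q.2) (closure Ω ×ˢ Icc 0 T))
    (hu_bdd : ∃ C, ∀ x ∈ closure Ω, ∀ t ∈ Icc (0:ℝ) T, |u x t| ≤ C)
    (hu_pde : ∀ x ∈ Ω, ∀ t ∈ Ioo (0:ℝ) T, parabolicOp a b c u x t = f x t)
    (hu_bc : ∀ x ∈ frontier Ω, ∀ t ∈ Ioo (0:ℝ) T, u x t = g x t)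
    (hu_ic : ∀ x ∈ Ω, u x 0 = g x 0)
    -- the Schwarz waveform relaxation iterates u_l^k = U k l, k ≥ 1, 1 ≤ l ≤ I
    (U : ℕ → ℕ → (Fin (n+1) → ℝ) → ℝ → ℝ)
    (hU_smooth : ∀ k, 1 ≤ k → ∀ l, 1 ≤ l → l ≤ I →
      ContDiffOn ℝ (⊤ : ℕ∞) (fun q : (Fin (n+1) → ℝ) × ℝ => U k l q.1 q.2)
        (closure (Ωl l) ×ˢ Icc 0 T))
    (hU_pde : ∀ k, 1 ≤ k → ∀ l, 1 ≤ l → l ≤ I →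
      ∀ x ∈ Ωl l, ∀ t ∈ Ioo (0:ℝ) T, parabolicOp a b c (U k l) x t = f x t)
    -- Robin transmission conditions (for k ≥ 2; the first iterates are arbitrary,
    -- coming from an arbitrary smooth bounded initial guess h⁰)
    (hU_robin_left : ∀ k, 2 ≤ k → ∀ l, 2 ≤ l → l ≤ I → ∀ X ∈ D, ∀ t ∈ Ioo (0:ℝ) T,
      fderivWithin ℝ (fun y => U k l y t) (closure (Ωl l))
          (Fin.snoc X (aa l)) (Pi.single (Fin.last n) 1)
        + p * U k l (Fin.snoc X (aa l)) t
      = fderivWithin ℝ (fun y => U (k - 1) (l - 1) y t) (closure (Ωl (l - 1)))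
          (Fin.snoc X (aa l)) (Pi.single (Fin.last n) 1)
        + p * U (k - 1) (l - 1) (Fin.snoc X (aa l)) t)
    (hU_robin_right : ∀ k, 2 ≤ k → ∀ l, 1 ≤ l → l + 1 ≤ I → ∀ X ∈ D, ∀ t ∈ Ioo (0:ℝ) T,
      fderivWithin ℝ (fun y => U k l y t) (closure (Ωl l))
          (Fin.snoc X (bb l)) (Pi.single (Fin.last n) 1)
        + p * U k l (Fin.snoc X (bb l)) t
      = fderivWithin ℝ (fun y => U (k - 1) (l + 1) y t) (closure (Ωl (l + 1)))
          (Fin.snoc X (bb l)) (Pi.single (Fin.last n) 1)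
        + p * U (k - 1) (l + 1) (Fin.snoc X (bb l)) t)
    -- inherited boundary and initial conditions
    (hU_bc : ∀ k, 1 ≤ k → ∀ l, 1 ≤ l → l ≤ I →
      ∀ x ∈ frontier (Ωl l) ∩ frontier Ω, ∀ t ∈ Ioo (0:ℝ) T, U k l x t = g x t)
    (hU_ic : ∀ k, 1 ≤ k → ∀ l, 1 ≤ l → l ≤ I → ∀ x ∈ Ωl l, U k l x 0 = g x 0)
    -- special treatment of the extreme subdomains
    (hU_left_end : ∀ k, 1 ≤ k → ∀ X ∈ D, ∀ t ∈ Ioo (0:ℝ) T,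
      U k 1 (Fin.snoc X α) t = g (Fin.snoc X α) t)
    (hU_right_end : ∀ k, 1 ≤ k → ∀ X ∈ D, ∀ t ∈ Ioo (0:ℝ) T,
      U k I (Fin.snoc X β) t = g (Fin.snoc X β) t) :
    ∃ Γ : ℝ, 0 < Γ ∧
      ∀ ϕ : ℝ → ℝ, ContDiff ℝ 1 ϕ →
        (∀ t ∈ Icc (0:ℝ) T, 0 < ϕ t) →
        (∀ t ∈ Icc (0:ℝ) T, deriv ϕ t ≤ -Γ * ϕ t) →
        Tendsto
          (fun k =>
            sSup {y : ℝ | ∃ l, 1 ≤ l ∧ l ≤ I ∧ ∃ x ∈ closure (Ωl l), ∃ t ∈ Icc (0:ℝ) T,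
              y = (fderivWithin ℝ (fun z => U k l z t - u z t) (closure (Ωl l)) x
                    (Pi.single (Fin.last n) 1)) ^ 2
                  * Real.exp (2 * p * x (Fin.last n)) * ϕ t})
          atTop (nhds 0) := by
  obtain rfl : Ω = cylinder D α β := hΩ
  obtain rfl : Ωl = fun l => cylinder D (aa l) (bb l) := funext hΩl
  subst haa1 hbbI
  obtain ⟨M, hK⟩ := ParabolicCoeffs.exists_isUniformlyParabolicInLast (K := ⟨a, b, c⟩) hν₀.le
    ha_symm hell (ha_bdd _ _) (hb_bdd _) hc_bdd
  have hu : IsInitialValueSolution ⟨a, b, c⟩ T (cylinder D (aa 1) (bb I)) (fun q => f q.1 q.2)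
      (fun q => g q.1 q.2) fun q => u q.1 q.2 :=
    ⟨contDiffOn_infty.1 hu_smooth 3, hu_pde, hu_ic⟩
  have hU : IsSchwarzIteration ⟨a, b, c⟩ T p D I aa bb (fun q => f q.1 q.2)
      (fun q => g q.1 q.2) fun k l q => U k l q.1 q.2 :=
    ⟨fun k hk l hl => ⟨contDiffOn_infty.1 (hU_smooth k hk l hl.1 hl.2) 3,
      hU_pde k hk l hl.1 hl.2, hU_ic k hk l hl.1 hl.2⟩, hU_robin_left, hU_robin_right,
      fun k hk l hl => hU_bc k hk l hl.1 hl.2⟩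
  refine ⟨1, one_pos, fun ϕ hϕ _ _ => ?_⟩
  obtain ⟨R, hR⟩ := isCompact_Icc.exists_bound_of_continuousOn hϕ.continuous.continuousOn
  exact schwarz_method_weighted_uniform_convergence_general hT hν₀ hK hD_open hD_bdd
    ⟨hI, horder⟩ hU hu hu_bc hR
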